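/- arXiv:math/0703792 — 7 statements merged into one kernel-verified Lean document; each statement's English description precedes it below -/
import Mathlib

section
/- Let M be a 3×3 matrix with nonnegative integer entries belonging to E(3,ℕ). Then the row vector (1, −1, 1) is a left eigenvector of M: there exists a nonzero integer c such that (1, −1, 1) · M = c · (1, −1, 1). -/
/-!
The row vector `v = (1, -1, 1)` spans the left kernel of `E`. From `M E Mᵀ = k E` we get
`((v M) E) Mᵀ = k v E = 0`, and `Mᵀ` can be cancelled because its determinant is not a zero divisor.
So `v M` lies in the left kernel of `E` again, which makes it a multiple `c v`.
If `r c = 0`, then `(r v) M = 0`, so `r v = 0` and `r = 0`; in particular `c ≠ 0`.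
-/

open Matrix
/-- The matrix E from the paper. -/
def Emat : Matrix (Fin 3) (Fin 3) ℤ := !![0, 1, 1; -1, 0, 1; -1, -1, 0]

/-- The monoid E(3,ℕ): 3×3 matrices with nonnegative integer entries such that
M · E · Mᵀ = ±E and det M = ±1. -/
def E3N : Set (Matrix (Fin 3) (Fin 3) ℤ) :=
  {M | (∀ i j, 0 ≤ M i j) ∧
    (M * Emat * Mᵀ = Emat ∨ M * Emat * Mᵀ = -Emat) ∧
    (M.det = 1 ∨ M.det = -1)}

section LeftKernel

variable {m n R : Type*} [Fintype m] [Fintype n] [DecidableEq n] [CommRing R]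

theorem vecMul_vecMul_eq_zero_of_mul_mul_eq_smul {A : Matrix m n R} {M : Matrix m m R}
    {N : Matrix n n R} {k : R} (hN : N.det ∈ nonZeroDivisors R) (hA : M * A * N = k • A)
    {v : m → R} (hv : v ᵥ* A = 0) : v ᵥ* M ᵥ* A = 0 := by
  refine eq_zero_of_det_mem_nonZeroDivisors_of_vecMul_eq_zero hN ?_
  calc v ᵥ* M ᵥ* A ᵥ* N = v ᵥ* (M * A * N) := by simp only [vecMul_vecMul]
    _ = k • (v ᵥ* A) := by rw [hA, vecMul_smul]
    _ = 0 := by rw [hv, smul_zero]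

theorem mem_nonZeroDivisors_of_vecMul_eq_smul {M : Matrix n n R}
    (hM : M.det ∈ nonZeroDivisors R) {v : n → R} (hv : ∀ r : R, r • v = 0 → r = 0) {c : R}
    (hc : v ᵥ* M = c • v) : c ∈ nonZeroDivisors R := by
  refine mem_nonZeroDivisors_iff_right.mpr fun r hr ↦ hv r ?_
  refine eq_zero_of_det_mem_nonZeroDivisors_of_vecMul_eq_zero hM ?_
  rw [smul_vecMul, hc, smul_smul, hr, zero_smul]

end LeftKernel

section Emat

variable {R : Type*} [CommRing R]

theorem vecMul_Emat_map_intCast (w : Fin 3 → R) :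
    w ᵥ* Emat.map (Int.cast : ℤ → R) = ![-w 1 - w 2, w 0 - w 2, w 0 + w 1] := by
  ext j
  fin_cases j <;> simp [Emat, vecMul, dotProduct, Fin.sum_univ_three] <;> ring

theorem vecMul_Emat_map_intCast_eq_zero_iff {w : Fin 3 → R} :
    w ᵥ* Emat.map (Int.cast : ℤ → R) = 0 ↔ ∃ c : R, w = c • ![1, -1, 1] := by
  rw [vecMul_Emat_map_intCast]
  constructor
  · intro hw
    have h₁ : w 0 - w 2 = 0 := congrFun hw 1
    have h₂ : w 0 + w 1 = 0 := congrFun hw 2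
    refine ⟨w 0, ?_⟩
    ext i
    fin_cases i
    · simp
    · simpa using eq_neg_of_add_eq_zero_right h₂
    · simpa using (sub_eq_zero.mp h₁).symm
  · rintro ⟨c, rfl⟩
    simp

theorem left_eigenvector_of_mem_E3N_general {M : Matrix (Fin 3) (Fin 3) R} {k : R}
    (hdet : M.det ∈ nonZeroDivisors R)
    (hE : M * Emat.map (Int.cast : ℤ → R) * Mᵀ = k • Emat.map (Int.cast : ℤ → R)) :
    ∃ c ∈ nonZeroDivisors R, ![1, -1, 1] ᵥ* M = c • ![1, -1, 1] := by
  have hker : ![1, -1, 1] ᵥ* Emat.map (Int.cast : ℤ → R) = 0 :=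
    vecMul_Emat_map_intCast_eq_zero_iff.mpr ⟨1, (one_smul R _).symm⟩
  have hdet_transpose : Mᵀ.det ∈ nonZeroDivisors R := by rwa [det_transpose]
  obtain ⟨c, hc⟩ := vecMul_Emat_map_intCast_eq_zero_iff.mp
    (vecMul_vecMul_eq_zero_of_mul_mul_eq_smul hdet_transpose hE hker)
  have hfaithful (r : R) (hr : r • ![(1 : R), -1, 1] = 0) : r = 0 := by
    simpa using congrFun hr 0
  exact ⟨c, mem_nonZeroDivisors_of_vecMul_eq_smul hdet hfaithful hc, hc⟩

end Emat

theorem exists_mul_Emat_mul_transpose_eq_smul_of_mem_E3N {M : Matrix (Fin 3) (Fin 3) ℤ}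
    (hM : M ∈ E3N) : ∃ k : ℤ, M * Emat * Mᵀ = k • Emat := by
  rcases hM.2.1 with h | h
  · exact ⟨1, by rw [h, one_smul]⟩
  · exact ⟨-1, by rw [h, neg_one_smul]⟩

theorem isUnit_det_of_mem_E3N {M : Matrix (Fin 3) (Fin 3) ℤ} (hM : M ∈ E3N) : IsUnit M.det :=
  Int.isUnit_iff.mpr hM.2.2

/-- If M ∈ E(3,ℕ), then (1,−1,1) is a left eigenvector of M. -/
theorem left_eigenvector_of_mem_E3N (M : Matrix (Fin 3) (Fin 3) ℤ) (hM : M ∈ E3N) :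
    ∃ c : ℤ, c ≠ 0 ∧ Matrix.vecMul ![1, -1, 1] M = c • ![1, -1, 1] := by
  obtain ⟨k, hk⟩ := exists_mul_Emat_mul_transpose_eq_smul_of_mem_E3N hM
  obtain ⟨c, hc, hcM⟩ := left_eigenvector_of_mem_E3N_general
    (isUnit_det_of_mem_E3N hM).mem_nonZeroDivisors hk
  exact ⟨c, nonZeroDivisors.ne_zero hc, hcM⟩
end

section
/- The units of the monoid E(3,ℕ) are exactly the 3×3 identity matrix and the matrix P = ![![0,0,1],![0,1,0],![1,0,0]]: a matrix U ∈ E(3,ℕ) is a unit of E(3,ℕ) if and only if U is the identity or U = P. -/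
open Matrix

/-- The permutation matrix P. -/
def Pmat : Matrix (Fin 3) (Fin 3) ℤ := !![0, 0, 1; 0, 1, 0; 1, 0, 0]

/-- U is a unit of the (multiplicative) monoid given by the set S:
for every A ∈ S there are B, C ∈ S with A = B·U and A = U·C. -/
def IsUnitOf (S : Set (Matrix (Fin 3) (Fin 3) ℤ)) (U : Matrix (Fin 3) (Fin 3) ℤ) : Prop :=
  U ∈ S ∧ ∀ A ∈ S, (∃ B ∈ S, A = B * U) ∧ (∃ C ∈ S, A = U * C)

/-!
An invertible element of `E(3,ℕ)` is a nonnegative integer matrix with a nonnegative inverse. In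
`∑ k, U i k * V k j = δ i j` no cancellation is possible, which forces `U` to be the matrix of a
permutation `σ`. Since `E` records the comparison of its two indices, `U * E * Uᵀ = ±E` says that
`σ` preserves or reverses the order of the indices, so `σ` is the identity or the reversal.
Conversely a permutation matrix has finite order, hence is invertible in every monoid of matrices
that contains it.
-/

section NonnegativeInverse

variable {m n R : Type*} [Fintype n] [DecidableEq m] [Semiring R]
  {U : Matrix m n R} {V : Matrix n m R}

theorem exists_apply_ne_zero_of_mul_eq_one [Nontrivial R] (hUV : U * V = 1) (i : m) :
    ∃ k, U i k ≠ 0 ∧ V k i ≠ 0 := by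
  have hsum : ∑ k, U i k * V k i ≠ 0 := by
    rw [← Matrix.mul_apply, hUV, Matrix.one_apply_eq]
    exact one_ne_zero
  obtain ⟨k, -, hk⟩ := Finset.exists_ne_zero_of_sum_ne_zero hsum
  exact ⟨k, left_ne_zero_of_mul hk, right_ne_zero_of_mul hk⟩

theorem apply_eq_zero_of_mul_eq_one [PartialOrder R] [IsOrderedRing R] [NoZeroDivisors R]
    (hU : ∀ i j, 0 ≤ U i j) (hV : ∀ i j, 0 ≤ V i j) (hUV : U * V = 1) {i j : m} {k : n}
    (hik : U i k ≠ 0) (hij : i ≠ j) : V k j = 0 := by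
  have hsum : ∑ l, U i l * V l j = 0 := by
    rw [← Matrix.mul_apply, hUV, Matrix.one_apply_ne hij]
  have hterm : U i k * V k j = 0 :=
    (Finset.sum_eq_zero_iff_of_nonneg fun l _ => mul_nonneg (hU i l) (hV l j)).mp hsum k
      (Finset.mem_univ k)
  exact (mul_eq_zero.mp hterm).resolve_left hik

end NonnegativeInverse

section PermutationMatrix

variable {n : Type*} [Fintype n] [DecidableEq n]

theorem exists_row_eq_single_of_mul_eq_one {U V : Matrix n n ℤ} (hU : ∀ i j, 0 ≤ U i j)
    (hV : ∀ i j, 0 ≤ V i j) (hUV : U * V = 1) (i : n) :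
    ∃ k, U i = Pi.single k 1 ∧ V k i ≠ 0 := by
  obtain ⟨k, -, hVk⟩ := exists_apply_ne_zero_of_mul_eq_one hUV i
  have hzero : ∀ l, l ≠ k → U i l = 0 := fun l hl =>
    apply_eq_zero_of_mul_eq_one hV hU (mul_eq_one_comm.mp hUV) hVk hl.symm
  have hmul : U i k * V k i = 1 := by
    have hsum : ∑ l, U i l * V l i = 1 := by
      rw [← Matrix.mul_apply, hUV, Matrix.one_apply_eq]
    rwa [Fintype.sum_eq_single k fun l hl => by rw [hzero l hl, zero_mul]] at hsum
  refine ⟨k, funext fun l => ?_, hVk⟩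
  obtain rfl | hl := eq_or_ne l k
  · rw [Pi.single_eq_same, Int.eq_one_of_mul_eq_one_right (hU i l) hmul]
  · rw [Pi.single_eq_of_ne hl, hzero l hl]

theorem exists_eq_permMatrix_of_mul_eq_one {U V : Matrix n n ℤ} (hU : ∀ i j, 0 ≤ U i j)
    (hV : ∀ i j, 0 ≤ V i j) (hUV : U * V = 1) :
    ∃ σ : Equiv.Perm n, U = σ.permMatrix ℤ := by
  choose f hf hVf using exists_row_eq_single_of_mul_eq_one hU hV hUV
  have hf_inj : Function.Injective f := by
    intro i j hij
    by_contra hne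
    have hUi : U i (f j) ≠ 0 := by simp [hf i, hij]
    exact hVf j (apply_eq_zero_of_mul_eq_one hU hV hUV hUi hne)
  let σ : Equiv.Perm n := Equiv.ofBijective f (Finite.injective_iff_bijective.mp hf_inj)
  exact ⟨σ, funext fun i => (hf i).trans (PEquiv.toMatrix_toPEquiv_apply σ i).symm⟩

theorem permMatrix_mul_mul_transpose {R : Type*} [NonAssocSemiring R] (σ : Equiv.Perm n)
    (E : Matrix n n R) : σ.permMatrix R * E * (σ.permMatrix R)ᵀ = E.submatrix σ σ := by
  rw [Matrix.transpose_permMatrix, PEquiv.toMatrix_toPEquiv_mul, PEquiv.mul_toMatrix_toPEquiv,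
    Matrix.submatrix_submatrix]
  rfl

theorem isOfFinOrder_permMatrix {R : Type*} [Semiring R] (σ : Equiv.Perm n) :
    IsOfFinOrder (σ.permMatrix R) := by
  simpa using (Matrix.permMatrixHom (R := R)).isOfFinOrder (isOfFinOrder_of_finite σ⁻¹)

end PermutationMatrix

section SignedIsometries

variable {n : Type*} [Fintype n] [DecidableEq n]

/-- The monoid of nonnegative integer matrices of determinant `±1` that preserve the bilinear form
with matrix `E` up to sign. It is `E(3,ℕ)` when `E` is `Emat`. -/
def nonnegSignedIsometries (E : Matrix n n ℤ) : Submonoid (Matrix n n ℤ) where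
  carrier := {M | (∀ i j, 0 ≤ M i j) ∧ (M * E * Mᵀ = E ∨ M * E * Mᵀ = -E) ∧
    (M.det = 1 ∨ M.det = -1)}
  one_mem' := by
    refine ⟨fun i j => ?_, by simp, by simp⟩
    rw [Matrix.one_apply]
    split_ifs <;> simp
  mul_mem' := by
    rintro A B ⟨hA, hAE, hAdet⟩ ⟨hB, hBE, hBdet⟩
    refine ⟨fun i j => ?_, ?_, ?_⟩
    · rw [Matrix.mul_apply]
      exact Finset.sum_nonneg fun k _ => mul_nonneg (hA i k) (hB k j)
    · have hAB : A * B * E * (A * B)ᵀ = A * (B * E * Bᵀ) * Aᵀ := by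
        simp only [Matrix.transpose_mul, Matrix.mul_assoc]
      rw [hAB]
      rcases hAE with hAE | hAE <;> rcases hBE with hBE | hBE <;> simp [hAE, hBE]
    · rw [Matrix.det_mul]
      rcases hAdet with hAdet | hAdet <;> rcases hBdet with hBdet | hBdet <;> simp [hAdet, hBdet]

theorem isUnit_nonnegSignedIsometries_iff {E : Matrix n n ℤ} (U : nonnegSignedIsometries E) :
    IsUnit U ↔ ∃ σ : Equiv.Perm n, (U : Matrix n n ℤ) = σ.permMatrix ℤ := by
  constructor
  · intro hU
    obtain ⟨V, hUV⟩ := hU.exists_right_inv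
    exact exists_eq_permMatrix_of_mul_eq_one U.2.1 V.2.1 (congrArg Subtype.val hUV)
  · rintro ⟨σ, hσ⟩
    have hU : IsOfFinOrder (U : Matrix n n ℤ) := hσ ▸ isOfFinOrder_permMatrix σ
    exact (Submonoid.isOfFinOrder_coe.mp hU).isUnit

end SignedIsometries

section ComparisonMatrix

variable {ι κ : Type*} [LinearOrder ι] [LinearOrder κ]

/-- The skew-symmetric matrix whose `(i, j)` entry is `1`, `0` or `-1` according to whether `i < j`,
`i = j` or `i > j`. It extends `Emat` to an arbitrary linearly ordered index type. -/
def comparisonMatrix (ι : Type*) [LinearOrder ι] : Matrix ι ι ℤ :=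
  Matrix.of fun i j => if i < j then 1 else if j < i then -1 else 0

theorem comparisonMatrix_apply_eq_one_iff {i j : ι} : comparisonMatrix ι i j = 1 ↔ i < j := by
  rw [comparisonMatrix, Matrix.of_apply]
  split_ifs <;> simp_all

theorem neg_comparisonMatrix : -comparisonMatrix ι = (comparisonMatrix ι)ᵀ := by
  ext i j
  rcases lt_trichotomy i j with hij | rfl | hji
  · simp [comparisonMatrix, hij, hij.not_gt]
  · simp [comparisonMatrix]
  · simp [comparisonMatrix, hji, hji.not_gt]

theorem strictMono_of_submatrix_comparisonMatrix {f : ι → κ}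
    (hf : (comparisonMatrix κ).submatrix f f = comparisonMatrix ι) : StrictMono f := by
  intro i j hij
  rw [← comparisonMatrix_apply_eq_one_iff] at hij ⊢
  rwa [← hf] at hij

theorem strictAnti_of_submatrix_comparisonMatrix {f : ι → κ}
    (hf : (comparisonMatrix κ).submatrix f f = -comparisonMatrix ι) : StrictAnti f := by
  intro i j hij
  rw [← comparisonMatrix_apply_eq_one_iff] at hij ⊢
  rw [neg_comparisonMatrix] at hf
  exact (congrFun₂ hf j i).trans hij

theorem perm_eq_one_of_strictMono [WellFoundedLT ι] {σ : Equiv.Perm ι} (hσ : StrictMono σ) :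
    σ = 1 := by
  have hrefl : hσ.orderIsoOfSurjective σ σ.surjective = OrderIso.refl ι := Subsingleton.elim _ _
  exact Equiv.ext fun i => congrArg (· i) hrefl

theorem perm_eq_revPerm_of_strictAnti {n : ℕ} {σ : Equiv.Perm (Fin n)} (hσ : StrictAnti σ) :
    σ = Fin.revPerm := by
  have hrev : Fin.revPerm * σ = 1 := perm_eq_one_of_strictMono (Fin.rev_strictAnti.comp hσ)
  exact (inv_eq_of_mul_eq_one_right hrev).symm

end ComparisonMatrix

theorem units_of_E3N_general {n : ℕ}
    (U : nonnegSignedIsometries (comparisonMatrix (Fin n))) :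
    IsUnit U ↔ (U : Matrix (Fin n) (Fin n) ℤ) = 1 ∨
      (U : Matrix (Fin n) (Fin n) ℤ) = Fin.revPerm.permMatrix ℤ := by
  rw [isUnit_nonnegSignedIsometries_iff]
  constructor
  · rintro ⟨σ, hσ⟩
    have hE := U.2.2.1
    rw [hσ, permMatrix_mul_mul_transpose] at hE
    rcases hE with hE | hE
    · left
      rw [hσ, perm_eq_one_of_strictMono (strictMono_of_submatrix_comparisonMatrix hE),
        Matrix.permMatrix_one]
    · right
      rw [hσ, perm_eq_revPerm_of_strictAnti (strictAnti_of_submatrix_comparisonMatrix hE)]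
  · rintro (hU | hU)
    · exact ⟨1, hU.trans Matrix.permMatrix_one.symm⟩
    · exact ⟨Fin.revPerm, hU⟩

theorem Emat_eq_comparisonMatrix : Emat = comparisonMatrix (Fin 3) := by
  decide

theorem Pmat_eq_permMatrix_revPerm : Pmat = Fin.revPerm.permMatrix ℤ := by
  decide

theorem E3N_eq_nonnegSignedIsometries :
    E3N = nonnegSignedIsometries (comparisonMatrix (Fin 3)) := by
  rw [← Emat_eq_comparisonMatrix]
  rfl

theorem isUnitOf_coe_iff_isUnit {S : Submonoid (Matrix (Fin 3) (Fin 3) ℤ)} (U : S) :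
    IsUnitOf S U ↔ IsUnit U := by
  constructor
  · rintro ⟨-, hU⟩
    obtain ⟨⟨B, hB, hBU⟩, C, hC, hUC⟩ := hU 1 S.one_mem
    exact isUnit_iff_exists_and_exists.mpr
      ⟨⟨⟨C, hC⟩, Subtype.ext hUC.symm⟩, ⟨⟨B, hB⟩, Subtype.ext hBU.symm⟩⟩
  · rintro ⟨u, rfl⟩
    refine ⟨u.val.2, fun A hA => ⟨⟨_, (⟨A, hA⟩ * u⁻¹.val : S).2, ?_⟩,
      ⟨_, (u⁻¹.val * ⟨A, hA⟩ : S).2, ?_⟩⟩⟩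
    · exact congrArg Subtype.val (u.inv_mul_cancel_right ⟨A, hA⟩).symm
    · exact congrArg Subtype.val (u.mul_inv_cancel_left ⟨A, hA⟩).symm

/-- The units of E(3,ℕ) are exactly the identity matrix and P. -/
theorem units_of_E3N (U : Matrix (Fin 3) (Fin 3) ℤ) (hU : U ∈ E3N) :
    IsUnitOf E3N U ↔ (U = 1 ∨ U = Pmat) := by
  rw [E3N_eq_nonnegSignedIsometries] at hU
  rw [E3N_eq_nonnegSignedIsometries, Pmat_eq_permMatrix_revPerm]
  exact (isUnitOf_coe_iff_isUnit ⟨U, hU⟩).trans (units_of_E3N_general ⟨U, hU⟩)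
end

section
/- Let k ≥ 1 be an integer and let A, B ∈ E(3,ℕ) be such that A · B = M_k and neither A nor B is a unit of E(3,ℕ). Then either A = M̃_k and B = M̃_1, or A = M̃_k · P and B = P · M̃_1. In other words, the decomposition M_k = M̃_k · M̃_1 into non-units of E(3,ℕ) is unique up to insertion of units. -/
/-!
The vector `w = (1, -1, 1)` spans the kernel of `E`, and a matrix `M` with `M E Mᵀ = ± E` and
`det M = ± 1` must preserve the line of row vectors spanned by `w`. So the middle row of `M` is the
sum of the outer rows, up to `± w`, and the sign can be read off any column that is a basis vector.

Let `A B = M_k`. The first column of `M_k` is `e₃`; as all entries are nonnegative and `A` has no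
zero column, the first column of `B` is some `e_j` and the `j`-th column of `A` is `e₃`. Passing
from `(A, B)` to `(A P, P B)` exchanges `j = 1` and `j = 3`. For `j = 1`, the outer rows of `M_k`
force `A = P` or `B = 1`. For `j = 2`, the last row forces `B = M̃_1` or `P B = M̃_1`, and `A`
follows by cancellation.
-/

open Matrix

/-- The matrix M_k. -/
def Mk (k : ℤ) : Matrix (Fin 3) (Fin 3) ℤ := !![0, k, k - 1; 0, k + 1, k; 1, 0, 2]

/-- The matrix M̃_k. -/
def Mtk (k : ℤ) : Matrix (Fin 3) (Fin 3) ℤ := !![k - 1, 0, k; k, 0, k + 1; 0, 1, 0]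

section General

lemma exists_eq_single_and_col_eq_single_of_mulVec_eq_single {m n : Type*} [Fintype n]
    [DecidableEq m] [DecidableEq n] {A : Matrix m n ℤ} {v : n → ℤ} {i : m}
    (hA : ∀ r l, 0 ≤ A r l) (hv : ∀ l, 0 ≤ v l) (hcol : ∀ l, A.col l ≠ 0)
    (hAv : A *ᵥ v = Pi.single i 1) :
    ∃ j, v = Pi.single j 1 ∧ A.col j = Pi.single i 1 := by
  have hnonneg : ∀ r l, 0 ≤ A r l * v l := fun r l ↦ mul_nonneg (hA r l) (hv l)
  have hsum : ∀ r, ∑ l, A r l * v l = (Pi.single i 1 : m → ℤ) r := fun r ↦ congrFun hAv r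
  have hsum_one : ∑ l, A i l * v l = 1 := by rw [hsum, Pi.single_eq_same]
  obtain ⟨j, -, hj⟩ : ∃ j ∈ Finset.univ, A i j * v j ≠ 0 :=
    Finset.exists_ne_zero_of_sum_ne_zero (hsum_one ▸ one_ne_zero)
  have hterm : ∀ r, ∀ l ≠ j, A r l * v l = 0 := by
    intro r l hl
    rcases eq_or_ne r i with rfl | hr
    · have hpair := Finset.add_le_sum (fun l _ ↦ hnonneg r l) (Finset.mem_univ l)
        (Finset.mem_univ j) hl
      have := hnonneg r l
      have := hnonneg r j
      lia
    · have hzero : ∑ l, A r l * v l = 0 := by rw [hsum, Pi.single_eq_of_ne hr]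
      exact (Finset.sum_eq_zero_iff_of_nonneg fun l _ ↦ hnonneg r l).1 hzero l (Finset.mem_univ l)
  have hv_ne : ∀ l ≠ j, v l = 0 := by
    intro l hl
    obtain ⟨r, hr⟩ := Function.ne_iff.1 (hcol l)
    exact (mul_eq_zero.1 (hterm r l hl)).resolve_left hr
  have hvj : v j = 1 := by
    rw [Finset.sum_eq_single_of_mem j (Finset.mem_univ j) fun l _ ↦ hterm i l] at hsum_one
    exact Int.eq_one_of_mul_eq_one_left (hv j) hsum_one
  have hv_eq : v = Pi.single j 1 := by
    ext l
    rcases eq_or_ne l j with rfl | hl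
    · rw [hvj, Pi.single_eq_same]
    · rw [hv_ne l hl, Pi.single_eq_of_ne hl]
  exact ⟨j, hv_eq, by rw [← hAv, hv_eq, mulVec_single_one]⟩

lemma mulVec_vecMul_eq_zero_of_mul_mul_transpose_eq_smul {n R : Type*} [Fintype n] [DecidableEq n]
    [CommRing R] [IsDomain R] {M J : Matrix n n R} {c : R} {w : n → R} (hM : M.det ≠ 0)
    (hform : M * J * Mᵀ = c • J) (hw : J *ᵥ w = 0) : J *ᵥ (w ᵥ* M) = 0 := by
  apply eq_zero_of_mulVec_eq_zero hM
  rw [← mulVec_transpose, mulVec_mulVec, mulVec_mulVec, hform, smul_mulVec,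
    hw, smul_zero]

lemma isUnitOf_of_mul_eq_one {S : Submonoid (Matrix (Fin 3) (Fin 3) ℤ)}
    {U V : Matrix (Fin 3) (Fin 3) ℤ} (hU : U ∈ S) (hV : V ∈ S) (hUV : U * V = 1) :
    IsUnitOf S U := by
  refine ⟨hU, fun A hA ↦ ⟨⟨A * V, S.mul_mem hA hV, ?_⟩, ⟨V * A, S.mul_mem hV hA, ?_⟩⟩⟩
  · rw [Matrix.mul_assoc, mul_eq_one_comm.1 hUV, Matrix.mul_one]
  · rw [← Matrix.mul_assoc, hUV, Matrix.one_mul]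

end General

/-- The monoid `E(3,ℕ)` as a submonoid of the integer matrices. -/
def submonoidE3N : Submonoid (Matrix (Fin 3) (Fin 3) ℤ) where
  carrier := E3N
  one_mem' := by
    refine ⟨fun i j ↦ ?_, Or.inl (by simp), Or.inl det_one⟩
    rw [one_apply]
    split_ifs <;> norm_num
  mul_mem' := by
    rintro M N ⟨hM_nonneg, hM_form, hM_det⟩ ⟨hN_nonneg, hN_form, hN_det⟩
    refine ⟨fun i j ↦ ?_, ?_, ?_⟩
    · rw [mul_apply]
      exact Finset.sum_nonneg fun l _ ↦ mul_nonneg (hM_nonneg i l) (hN_nonneg l j)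
    · have hassoc : M * N * Emat * (M * N)ᵀ = M * (N * Emat * Nᵀ) * Mᵀ := by
        simp only [transpose_mul, Matrix.mul_assoc]
      rw [hassoc]
      rcases hN_form with hN | hN <;> rcases hM_form with hM | hM <;> simp [hN, hM]
    · rw [det_mul]
      rcases hN_det with hN | hN <;> rcases hM_det with hM | hM <;> simp [hN, hM]

lemma Pmat_mem_E3N : Pmat ∈ E3N :=
  ⟨fun i j ↦ by fin_cases i <;> fin_cases j <;> decide, Or.inr (by decide), Or.inr (by decide)⟩

lemma Pmat_mul_self : Pmat * Pmat = 1 := by decide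

lemma isUnitOf_one : IsUnitOf E3N 1 :=
  isUnitOf_of_mul_eq_one submonoidE3N.one_mem submonoidE3N.one_mem (Matrix.mul_one 1)

lemma isUnitOf_Pmat : IsUnitOf E3N Pmat :=
  isUnitOf_of_mul_eq_one (S := submonoidE3N) Pmat_mem_E3N Pmat_mem_E3N Pmat_mul_self

lemma Mtk_mul_Mtk_one (k : ℤ) : Mtk k * Mtk 1 = Mk k := by
  ext i j
  fin_cases i <;> fin_cases j <;> simp [Mtk, Mk, mul_apply, Fin.sum_univ_three]

lemma eq_Mtk_of_mul_Mtk_one_eq_Mk {k : ℤ} {A : Matrix (Fin 3) (Fin 3) ℤ}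
    (h : A * Mtk 1 = Mk k) : A = Mtk k := by
  have hunit : IsUnit (Mtk 1) := by
    rw [isUnit_iff_isUnit_det, Int.isUnit_iff]
    decide
  exact hunit.mul_right_cancel (h.trans (Mtk_mul_Mtk_one k).symm)

section Pmat

variable {A B : Matrix (Fin 3) (Fin 3) ℤ}

lemma mul_Pmat_mul_Pmat_mul : A * Pmat * (Pmat * B) = A * B := by
  rw [Matrix.mul_assoc, ← Matrix.mul_assoc Pmat, Pmat_mul_self, Matrix.one_mul]

lemma eq_mul_Pmat_of_mul_Pmat_eq (h : A * Pmat = B) : A = B * Pmat := by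
  rw [← h, Matrix.mul_assoc, Pmat_mul_self, Matrix.mul_one]

lemma eq_Pmat_mul_of_Pmat_mul_eq (h : Pmat * A = B) : A = Pmat * B := by
  rw [← h, ← Matrix.mul_assoc, Pmat_mul_self, Matrix.one_mul]

lemma col_mul_Pmat (j : Fin 3) : (A * Pmat).col j = A.col j.rev := by
  ext i
  fin_cases j <;> simp [Pmat, mul_apply, Fin.sum_univ_three, Fin.rev]

lemma col_Pmat_mul_eq_single {i j : Fin 3} (h : B.col j = Pi.single i 1) :
    (Pmat * B).col j = Pi.single i.rev 1 := by
  rw [← mulVec_single_one, ← mulVec_mulVec, mulVec_single_one, h]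
  fin_cases i <;> decide

end Pmat

/-- The vector `(1, -1, 1)`, which spans the kernel of `Emat`. -/
def kerVec : Fin 3 → ℤ := ![1, -1, 1]

lemma Emat_mulVec_kerVec : Emat *ᵥ kerVec = 0 := by decide

lemma eq_smul_kerVec_of_Emat_mulVec_eq_zero {v : Fin 3 → ℤ} (h : Emat *ᵥ v = 0) :
    v = v 0 • kerVec := by
  have h₁ : -v 0 + v 2 = 0 := by
    simpa [Emat, mulVec, dotProduct, Fin.sum_univ_three] using congrFun h 1
  have h₂ : -v 0 + -v 1 = 0 := by
    simpa [Emat, mulVec, dotProduct, Fin.sum_univ_three] using congrFun h 2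
  ext l
  fin_cases l <;> simp [kerVec] <;> lia

section E3N

variable {M : Matrix (Fin 3) (Fin 3) ℤ}

lemma det_ne_zero_of_mem_E3N (hM : M ∈ E3N) : M.det ≠ 0 :=
  (Int.isUnit_iff.2 hM.2.2).ne_zero

lemma exists_kerVec_vecMul_eq_smul (hM : M ∈ E3N) : ∃ δ : ℤ, kerVec ᵥ* M = δ • kerVec := by
  obtain ⟨c, hform⟩ : ∃ c : ℤ, M * Emat * Mᵀ = c • Emat := by
    rcases hM.2.1 with h | h
    · exact ⟨1, by rw [h, one_smul]⟩
    · exact ⟨-1, by rw [h, neg_one_smul]⟩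
  exact ⟨_, eq_smul_kerVec_of_Emat_mulVec_eq_zero
    (mulVec_vecMul_eq_zero_of_mul_mul_transpose_eq_smul (det_ne_zero_of_mem_E3N hM) hform
      Emat_mulVec_kerVec)⟩

lemma middle_row_of_col_eq_single (hM : M ∈ E3N) {i j : Fin 3} (hcol : M.col j = Pi.single i 1)
    (l : Fin 3) : M 1 l = M 0 l + M 2 l - kerVec i * kerVec j * kerVec l := by
  obtain ⟨δ, hδ⟩ := exists_kerVec_vecMul_eq_smul hM
  have hentry : M 0 l - M 1 l + M 2 l = δ * kerVec l := by
    simpa [vecMul, dotProduct, kerVec, Fin.sum_univ_three, ← sub_eq_add_neg] using congrFun hδ l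
  have hsign : kerVec i = δ * kerVec j :=
    calc kerVec i = kerVec ⬝ᵥ M.col j := by rw [hcol, dotProduct_single_one]
      _ = δ * kerVec j := congrFun hδ j
  have hsq : kerVec j * kerVec j = 1 := by fin_cases j <;> rfl
  linear_combination -hentry + kerVec j * kerVec l * hsign + δ * kerVec l * hsq

lemma eq_Pmat_of_col_of_row_eq_single (hM : M ∈ E3N) (hcol : M.col 0 = Pi.single 2 1)
    (hrow : M.row 2 = Pi.single 0 1) : M = Pmat := by
  have h00 : M 0 0 = 0 := congrFun hcol 0
  have h10 : M 1 0 = 0 := congrFun hcol 1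
  have h20 : M 2 0 = 1 := congrFun hcol 2
  have h21 : M 2 1 = 0 := congrFun hrow 1
  have h22 : M 2 2 = 0 := congrFun hrow 2
  have h11 : M 1 1 = M 0 1 + 1 := by
    simpa [kerVec, h21] using middle_row_of_col_eq_single hM hcol 1
  have h12 : M 1 2 = M 0 2 - 1 := by
    simpa [kerVec, h22] using middle_row_of_col_eq_single hM hcol 2
  have hdet : M.det = -(M 0 1 + M 0 2) := by
    rw [det_fin_three, h00, h10, h20, h21, h22, h11, h12]
    ring
  have hM_det := hM.2.2
  have h01_nonneg := hM.1 0 1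
  have h12_nonneg := hM.1 1 2
  have h01 : M 0 1 = 0 := by lia
  have h02 : M 0 2 = 1 := by lia
  rw [eta_fin_three M, h11, h12, h00, h10, h20, h21, h22, h01, h02]
  rfl

lemma exists_eq_of_cols_eq_single_zero_one (hM : M ∈ E3N) (hcol₀ : M.col 0 = Pi.single 0 1)
    (hcol₁ : M.col 1 = Pi.single 1 1) : ∃ c, 0 ≤ c ∧ M = !![1, 0, c; 0, 1, c; 0, 0, 1] := by
  have h00 : M 0 0 = 1 := congrFun hcol₀ 0
  have h10 : M 1 0 = 0 := congrFun hcol₀ 1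
  have h20 : M 2 0 = 0 := congrFun hcol₀ 2
  have h01 : M 0 1 = 0 := congrFun hcol₁ 0
  have h11 : M 1 1 = 1 := congrFun hcol₁ 1
  have h21 : M 2 1 = 0 := congrFun hcol₁ 2
  have hdet : M.det = M 2 2 := by
    rw [det_fin_three, h00, h10, h20, h01, h11, h21]
    ring
  have h22 : M 2 2 = 1 := by
    have := hM.1 2 2
    have := hM.2.2
    lia
  have h12 : M 1 2 = M 0 2 := by
    simpa [kerVec, h22] using middle_row_of_col_eq_single hM hcol₀ 2
  refine ⟨M 0 2, hM.1 0 2, ?_⟩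
  conv_lhs => rw [eta_fin_three M, h00, h10, h20, h01, h11, h21, h12, h22]

lemma exists_eq_of_cols_eq_single_one_two (hM : M ∈ E3N) (hcol₀ : M.col 0 = Pi.single 1 1)
    (hcol₁ : M.col 1 = Pi.single 2 1) : ∃ c, 0 ≤ c ∧ M = !![0, 0, 1; 1, 0, c + 2; 0, 1, c] := by
  have h00 : M 0 0 = 0 := congrFun hcol₀ 0
  have h10 : M 1 0 = 1 := congrFun hcol₀ 1
  have h20 : M 2 0 = 0 := congrFun hcol₀ 2
  have h01 : M 0 1 = 0 := congrFun hcol₁ 0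
  have h11 : M 1 1 = 0 := congrFun hcol₁ 1
  have h21 : M 2 1 = 1 := congrFun hcol₁ 2
  have hdet : M.det = M 0 2 := by
    rw [det_fin_three, h00, h10, h20, h01, h11, h21]
    ring
  have h02 : M 0 2 = 1 := by
    have := hM.1 0 2
    have := hM.2.2
    lia
  have h12 : M 1 2 = M 2 2 + 2 := by
    have : M 1 2 = M 0 2 + M 2 2 + 1 := by
      simpa [kerVec] using middle_row_of_col_eq_single hM hcol₀ 2
    lia
  refine ⟨M 2 2, hM.1 2 2, ?_⟩
  conv_lhs => rw [eta_fin_three M, h00, h10, h20, h01, h11, h21, h12, h02]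

end E3N

section Factorization

variable {k : ℤ} {A B : Matrix (Fin 3) (Fin 3) ℤ}

lemma exists_cols_eq_single_of_mul_eq_Mk (hA : A ∈ E3N) (hB : B ∈ E3N) (hAB : A * B = Mk k) :
    ∃ j, B.col 0 = Pi.single j 1 ∧ A.col j = Pi.single 2 1 := by
  refine exists_eq_single_and_col_eq_single_of_mulVec_eq_single hA.1 (fun l ↦ hB.1 l 0)
    (fun l hl ↦ det_ne_zero_of_mem_E3N hA (det_eq_zero_of_column_eq_zero l (congrFun hl))) ?_
  calc A *ᵥ B.col 0 = (A * B).col 0 := by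
        rw [← mulVec_single_one, ← mulVec_single_one, mulVec_mulVec]
    _ = Pi.single 2 1 := by
        rw [hAB]
        ext i
        fin_cases i <;> rfl

lemma sum_mul_eq_Mk_apply (hAB : A * B = Mk k) (i j : Fin 3) :
    A i 0 * B 0 j + A i 1 * B 1 j + A i 2 * B 2 j = Mk k i j := by
  rw [← hAB, mul_apply, Fin.sum_univ_three]

lemma row_two_eq_or_col_one_eq_of_mul_eq_Mk (hA : A ∈ E3N) (hB : B ∈ E3N) (hAB : A * B = Mk k)
    (hAcol : A.col 0 = Pi.single 2 1) (hBcol : B.col 0 = Pi.single 0 1) :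
    A.row 2 = Pi.single 0 1 ∨ B.col 1 = Pi.single 1 1 := by
  have hA20 : A 2 0 = 1 := congrFun hAcol 2
  have hB11 : B 1 1 = B 0 1 + B 2 1 + 1 := by
    simpa [kerVec] using middle_row_of_col_eq_single hB hBcol 1
  have hentry : B 0 1 + A 2 1 * B 1 1 + A 2 2 * B 2 1 = 0 := by
    simpa [hA20, Mk] using sum_mul_eq_Mk_apply hAB 2 1
  have hB01_nonneg := hB.1 0 1
  have hB21_nonneg := hB.1 2 1
  have h₁ := mul_nonneg (hA.1 2 1) (hB.1 1 1)
  have h₂ := mul_nonneg (hA.1 2 2) (hB.1 2 1)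
  have hB01 : B 0 1 = 0 := by lia
  have hA21 : A 2 1 = 0 := (mul_eq_zero.1 (by lia : A 2 1 * B 1 1 = 0)).resolve_right (by lia)
  rcases mul_eq_zero.1 (by lia : A 2 2 * B 2 1 = 0) with hA22 | hB21
  · left
    ext l
    fin_cases l
    exacts [hA20, hA21, hA22]
  · right
    ext l
    fin_cases l
    exacts [hB01, by simp [hB11, hB01, hB21], hB21]

lemma eq_Pmat_or_eq_one_of_mul_eq_Mk (hA : A ∈ E3N) (hB : B ∈ E3N) (hAB : A * B = Mk k)
    (hAcol : A.col 0 = Pi.single 2 1) (hBcol : B.col 0 = Pi.single 0 1) :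
    A = Pmat ∨ B = 1 := by
  rcases row_two_eq_or_col_one_eq_of_mul_eq_Mk hA hB hAB hAcol hBcol with hrow | hcol
  · exact Or.inl (eq_Pmat_of_col_of_row_eq_single hA hAcol hrow)
  · right
    obtain ⟨c, hc, rfl⟩ := exists_eq_of_cols_eq_single_zero_one hB hBcol hcol
    have hA01 : A 0 1 = k := by simpa [Mk] using sum_mul_eq_Mk_apply hAB 0 1
    have hA00 : A 0 0 = 0 := congrFun hAcol 0
    have hentry : k * c + A 0 2 = k - 1 := by
      simpa [Mk, hA00, hA01] using sum_mul_eq_Mk_apply hAB 0 2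
    have hc_zero : c = 0 := by
      have := hA.1 0 1
      have := hA.1 0 2
      by_contra hne
      have : 1 ≤ c := by lia
      nlinarith
    rw [hc_zero, one_fin_three]

lemma col_one_eq_single_or_of_mul_eq_Mk (hA : A ∈ E3N) (hB : B ∈ E3N) (hAB : A * B = Mk k)
    (hAcol : A.col 1 = Pi.single 2 1) (hBcol : B.col 0 = Pi.single 1 1) :
    B.col 1 = Pi.single 2 1 ∨ B.col 1 = Pi.single 0 1 := by
  have hA21 : A 2 1 = 1 := congrFun hAcol 2
  have hentry : A 2 0 * B 0 1 + B 1 1 + A 2 2 * B 2 1 = 0 := by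
    simpa [hA21, Mk] using sum_mul_eq_Mk_apply hAB 2 1
  have hB01_nonneg := hB.1 0 1
  have hB11_nonneg := hB.1 1 1
  have hB21_nonneg := hB.1 2 1
  have h₀ := mul_nonneg (hA.1 2 0) (hB.1 0 1)
  have h₂ := mul_nonneg (hA.1 2 2) (hB.1 2 1)
  have hB11 : B 1 1 = 0 := by lia
  have hsum : B 1 1 = B 0 1 + B 2 1 - 1 := by
    simpa [kerVec] using middle_row_of_col_eq_single hB hBcol 1
  have hcases : B 0 1 = 0 ∧ B 2 1 = 1 ∨ B 0 1 = 1 ∧ B 2 1 = 0 := by lia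
  refine hcases.imp (fun h ↦ ?_) (fun h ↦ ?_) <;> ext l <;> fin_cases l
  exacts [h.1, hB11, h.2, h.1, hB11, h.2]

lemma eq_Mtk_and_eq_Mtk_one_of_mul_eq_Mk (hA : A ∈ E3N) (hB : B ∈ E3N) (hAB : A * B = Mk k)
    (hAcol : A.col 1 = Pi.single 2 1) (hBcol₀ : B.col 0 = Pi.single 1 1)
    (hBcol₁ : B.col 1 = Pi.single 2 1) : A = Mtk k ∧ B = Mtk 1 := by
  obtain ⟨c, hc, hB_eq⟩ := exists_eq_of_cols_eq_single_one_two hB hBcol₀ hBcol₁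
  have hA21 : A 2 1 = 1 := congrFun hAcol 2
  have hentry : A 2 0 + (c + 2) + A 2 2 * c = 2 := by
    simpa [hB_eq, hA21, Mk] using sum_mul_eq_Mk_apply hAB 2 2
  have hc_zero : c = 0 := by
    have := hA.1 2 0
    have := mul_nonneg (hA.1 2 2) hc
    lia
  have hB_one : B = Mtk 1 := by
    rw [hB_eq, hc_zero]
    rfl
  exact ⟨eq_Mtk_of_mul_Mtk_one_eq_Mk (hB_one ▸ hAB), hB_one⟩

end Factorization

/-- The decomposition M_k = M̃_k · M̃_1 into non-units of E(3,ℕ) is unique up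
to insertion of units. -/
theorem Mk_unique_decomposition (k : ℤ) (hk : 1 ≤ k) (A B : Matrix (Fin 3) (Fin 3) ℤ)
    (hA : A ∈ E3N) (hB : B ∈ E3N) (hAB : A * B = Mk k)
    (hAnu : ¬ IsUnitOf E3N A) (hBnu : ¬ IsUnitOf E3N B) :
    (A = Mtk k ∧ B = Mtk 1) ∨ (A = Mtk k * Pmat ∧ B = Pmat * Mtk 1) := by
  have hAP : A * Pmat ∈ E3N := submonoidE3N.mul_mem hA Pmat_mem_E3N
  have hPB : Pmat * B ∈ E3N := submonoidE3N.mul_mem Pmat_mem_E3N hB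
  have hAPPB : A * Pmat * (Pmat * B) = Mk k := mul_Pmat_mul_Pmat_mul.trans hAB
  obtain ⟨j, hBcol, hAcol⟩ := exists_cols_eq_single_of_mul_eq_Mk hA hB hAB
  have hAPcol : (A * Pmat).col j.rev = Pi.single 2 1 := by rw [col_mul_Pmat, Fin.rev_rev, hAcol]
  have hPBcol : (Pmat * B).col 0 = Pi.single j.rev 1 := col_Pmat_mul_eq_single hBcol
  fin_cases j
  · rcases eq_Pmat_or_eq_one_of_mul_eq_Mk hA hB hAB hAcol hBcol with rfl | rfl
    exacts [absurd isUnitOf_Pmat hAnu, absurd isUnitOf_one hBnu]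
  · rcases col_one_eq_single_or_of_mul_eq_Mk hA hB hAB hAcol hBcol with hBcol₁ | hBcol₁
    · exact Or.inl (eq_Mtk_and_eq_Mtk_one_of_mul_eq_Mk hA hB hAB hAcol hBcol hBcol₁)
    · exact Or.inr ((eq_Mtk_and_eq_Mtk_one_of_mul_eq_Mk hAP hPB hAPPB hAPcol hPBcol
        (col_Pmat_mul_eq_single hBcol₁)).imp eq_mul_Pmat_of_mul_Pmat_eq eq_Pmat_mul_of_Pmat_mul_eq)
  · rcases eq_Pmat_or_eq_one_of_mul_eq_Mk hAP hPB hAPPB hAPcol hPBcol with h | h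
    · have hA_one : A = 1 := (eq_mul_Pmat_of_mul_Pmat_eq h).trans Pmat_mul_self
      exact absurd (hA_one ▸ isUnitOf_one) hAnu
    · have hB_Pmat : B = Pmat := (eq_Pmat_mul_of_Pmat_mul_eq h).trans (Matrix.mul_one _)
      exact absurd (hB_Pmat ▸ isUnitOf_Pmat) hBnu
end

section
/- For every integer k ≥ 1, the matrix M̃_k = ![![k−1,0,k],![k,0,k+1],![0,1,0]] is non-decomposable in E(3,ℕ): whenever M̃_k = A · B with A, B ∈ E(3,ℕ), then A or B is a unit of E(3,ℕ) (i.e., A or B equals the identity matrix or P). -/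
/-!
The kernel of `E` is spanned by `(1, -1, 1)`, so the alternating row sum of every `M ∈ E(3,ℕ)` is a
multiple `c (1, -1, 1)`.

The entry `1` of `M̃_k` at the end of its middle column is the only nonzero entry of its row and of
its column. In a product `A B` of nonnegative integer matrices without zero rows or columns, such an
isolated one factors through a single index `j`: it is the product of an isolated one in the last
row of `A` and column `j`, and of an isolated one in row `j` and the middle column of `B`.
If `j` is the middle index, the alternating relation makes the outer rows of `B` add up to
`(1, 0, 1)`, so `B` is `1` or `P`. If `j` is the last index, it makes `det A` equal to `x + y + 1`,
where `x, y ≥ 0` are the remaining off-diagonal entries, so they vanish and `A = 1`. If `j` is the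
first index, the same applies to `A P`, so `A = P`.
-/

open Matrix

section Determinant

variable {n R : Type*} [Fintype n] [DecidableEq n] [CommRing R]

theorem mulVec_vecMul_eq_zero [IsDomain R] {M E : Matrix n n R} {c : R} (hdet : M.det ≠ 0)
    (hM : M * E * Mᵀ = c • E) {v : n → R} (hv : E *ᵥ v = 0) : E *ᵥ (v ᵥ* M) = 0 := by
  refine eq_zero_of_mulVec_eq_zero hdet ?_
  calc M *ᵥ (E *ᵥ (v ᵥ* M)) = (M * E * Mᵀ) *ᵥ v := by
        rw [← mulVec_transpose, mulVec_mulVec, mulVec_mulVec]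
    _ = 0 := by rw [hM, smul_mulVec, hv, smul_zero]

theorem row_ne_zero_of_det_ne_zero {M : Matrix n n R} (hdet : M.det ≠ 0) (i : n) :
    M.row i ≠ 0 :=
  fun h => hdet (det_eq_zero_of_row_eq_zero i (congrFun h))

theorem col_ne_zero_of_det_ne_zero {M : Matrix n n R} (hdet : M.det ≠ 0) (j : n) :
    M.col j ≠ 0 :=
  fun h => hdet (det_eq_zero_of_column_eq_zero j (congrFun h))

end Determinant

/-- The entry of `M` at `(r, s)` is one and every other entry of row `r` and of column `s`
vanishes. Factorisations into nonnegative matrices preserve this pattern, so it locates the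
unit factor. -/
structure IsIsolatedOne {m n R : Type*} [DecidableEq m] [DecidableEq n] [Zero R] [One R]
    (M : Matrix m n R) (r : m) (s : n) : Prop where
  row_eq : M.row r = Pi.single s 1
  col_eq : M.col s = Pi.single r 1

namespace IsIsolatedOne

variable {l m n R : Type*} [DecidableEq l] [DecidableEq m] [DecidableEq n]

section ZeroOne

variable [Zero R] [One R] {M : Matrix m n R} {r : m} {s : n}

theorem apply_eq_one (h : IsIsolatedOne M r s) : M r s = 1 := by
  simpa using congrFun h.row_eq s

theorem row_apply_eq_zero (h : IsIsolatedOne M r s) {j : n} (hj : j ≠ s) : M r j = 0 := by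
  simpa [hj] using congrFun h.row_eq j

theorem col_apply_eq_zero (h : IsIsolatedOne M r s) {i : m} (hi : i ≠ r) : M i s = 0 := by
  simpa [hi] using congrFun h.col_eq i

end ZeroOne

theorem mul [Fintype m] [NonAssocSemiring R] {A : Matrix l m R} {B : Matrix m n R} {r : l} {j : m}
    {s : n} (hA : IsIsolatedOne A r j) (hB : IsIsolatedOne B j s) : IsIsolatedOne (A * B) r s where
  row_eq := calc
    (A * B).row r = A.row r ᵥ* B := rfl
    _ = Pi.single s 1 := by rw [hA.row_eq, single_one_vecMul, hB.row_eq]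
  col_eq := calc
    (A * B).col s = A *ᵥ B.col s := rfl
    _ = Pi.single r 1 := by rw [hB.col_eq, mulVec_single_one, hA.col_eq]

end IsIsolatedOne

section NonnegFactors

theorem one_le_mulVec_one {m n : Type*} [Fintype n] {B : Matrix m n ℤ} (hB : ∀ i j, 0 ≤ B i j)
    (hrow : ∀ i, B.row i ≠ 0) : 1 ≤ B *ᵥ 1 := by
  intro i
  have hpos : 0 < ∑ j, B i j := Fintype.sum_pos ((show 0 ≤ B.row i from hB i).lt_of_ne' (hrow i))
  simpa [mulVec, dotProduct] using Int.add_one_le_of_lt hpos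

variable {l m n : Type*} [Fintype m] [DecidableEq m] [DecidableEq n]

theorem exists_eq_single_one_of_sum_le_one {v : m → ℤ} (hv : 0 ≤ v) (hne : v ≠ 0)
    (hsum : ∑ i, v i ≤ 1) : ∃ j, v = Pi.single j 1 := by
  obtain ⟨j, hj⟩ := Function.ne_iff.1 hne
  have hle : Pi.single j 1 ≤ v := update_le_iff.2 ⟨(hv j).lt_of_ne' hj, fun i _ => hv i⟩
  have hsum_eq : ∑ i, (Pi.single j 1 : m → ℤ) i = ∑ i, v i :=
    (Finset.sum_le_sum fun i _ => hle i).antisymm (by simpa using hsum)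
  refine ⟨j, funext fun i => ?_⟩
  exact ((Finset.sum_eq_sum_iff_of_le fun i _ => hle i).1 hsum_eq i (Finset.mem_univ i)).symm

theorem exists_eq_single_one_of_vecMul_eq_single_one [Finite n] {v : m → ℤ} {B : Matrix m n ℤ}
    {s : n} (hv : 0 ≤ v) (hB : ∀ i j, 0 ≤ B i j) (hrow : ∀ i, B.row i ≠ 0)
    (h : v ᵥ* B = Pi.single s 1) : ∃ j, v = Pi.single j 1 ∧ B.row j = Pi.single s 1 := by
  cases nonempty_fintype n
  have hne : v ≠ 0 := by
    rintro rfl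
    simpa using congrFun h s
  have hsum : ∑ i, v i ≤ 1 := calc
    ∑ i, v i = v ⬝ᵥ 1 := (dotProduct_one v).symm
    _ ≤ v ⬝ᵥ B *ᵥ 1 := dotProduct_le_dotProduct_of_nonneg_left (one_le_mulVec_one hB hrow) hv
    _ = 1 := by rw [dotProduct_mulVec, h, single_one_dotProduct, Pi.one_apply]
  obtain ⟨j, rfl⟩ := exists_eq_single_one_of_sum_le_one hv hne hsum
  exact ⟨j, rfl, by rw [← h, single_one_vecMul]⟩

theorem IsIsolatedOne.exists_of_mul [Finite l] [Finite n] [DecidableEq l] {A : Matrix l m ℤ}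
    {B : Matrix m n ℤ} {r : l} {s : n} (hA : ∀ i j, 0 ≤ A i j) (hB : ∀ i j, 0 ≤ B i j)
    (hcol : ∀ j, A.col j ≠ 0) (hrow : ∀ j, B.row j ≠ 0) (h : IsIsolatedOne (A * B) r s) :
    ∃ j, IsIsolatedOne A r j ∧ IsIsolatedOne B j s := by
  obtain ⟨j, hAr, hBj⟩ := exists_eq_single_one_of_vecMul_eq_single_one (hA r) hB hrow h.row_eq
  obtain ⟨j', hBs, hAj'⟩ := exists_eq_single_one_of_vecMul_eq_single_one (B := Aᵀ)
    (fun i => hB i s) (fun i j => hA j i) hcol ((vecMul_transpose A _).trans h.col_eq)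
  have hj : j' = j := by
    by_contra hne
    have hone : A r j' = 1 := by simpa using congrFun hAj' r
    simp [hAr, hne] at hone
  subst hj
  exact ⟨j', ⟨hAr, hAj'⟩, ⟨hBj, hBs⟩⟩

end NonnegFactors

theorem exists_eq_smul_of_Emat_mulVec_eq_zero {v : Fin 3 → ℤ} (hv : Emat *ᵥ v = 0) :
    ∃ c : ℤ, v = c • ![1, -1, 1] := by
  have h₁ : -v 0 + v 2 = 0 := by
    simpa [Emat, mulVec, dotProduct, Fin.sum_univ_three] using congrFun hv 1
  have h₂ : -v 0 + -v 1 = 0 := by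
    simpa [Emat, mulVec, dotProduct, Fin.sum_univ_three] using congrFun hv 2
  refine ⟨v 0, funext fun i => ?_⟩
  fin_cases i <;> simp <;> omega

namespace E3N

variable {A B M : Matrix (Fin 3) (Fin 3) ℤ}

theorem det_ne_zero (hM : M ∈ E3N) : M.det ≠ 0 := by
  rcases hM.2.2 with h | h <;> simp [h]

theorem mul_mem (hA : A ∈ E3N) (hB : B ∈ E3N) : A * B ∈ E3N := by
  obtain ⟨nonnegA, formA, detA⟩ := hA
  obtain ⟨nonnegB, formB, detB⟩ := hB
  have form_mul : A * B * Emat * (A * B)ᵀ = A * (B * Emat * Bᵀ) * Aᵀ := by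
    simp only [transpose_mul, Matrix.mul_assoc]
  refine ⟨fun i j => ?_, ?_, ?_⟩
  · rw [mul_apply]
    exact Finset.sum_nonneg fun p _ => mul_nonneg (nonnegA i p) (nonnegB p j)
  · rw [form_mul]
    rcases formA with hA | hA <;> rcases formB with hB | hB <;> simp [hA, hB]
  · rw [det_mul]
    rcases detA with hA | hA <;> rcases detB with hB | hB <;> simp [hA, hB]

theorem Pmat_mem : Pmat ∈ E3N :=
  ⟨fun i j => by fin_cases i <;> fin_cases j <;> decide, Or.inr (by decide), Or.inr (by decide)⟩

theorem exists_vecMul_eq_smul (hM : M ∈ E3N) :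
    ∃ c : ℤ, ![1, -1, 1] ᵥ* M = c • ![1, -1, 1] := by
  obtain ⟨ε, hε⟩ : ∃ ε : ℤ, M * Emat * Mᵀ = ε • Emat := by
    rcases hM.2.1 with h | h
    · exact ⟨1, by simpa using h⟩
    · exact ⟨-1, by simpa using h⟩
  exact exists_eq_smul_of_Emat_mulVec_eq_zero
    (mulVec_vecMul_eq_zero (det_ne_zero hM) hε (by decide))

theorem exists_alternating_col_sums (hM : M ∈ E3N) :
    ∃ c : ℤ, M 0 0 - M 1 0 + M 2 0 = c ∧ M 0 1 - M 1 1 + M 2 1 = -c ∧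
      M 0 2 - M 1 2 + M 2 2 = c := by
  obtain ⟨c, hc⟩ := exists_vecMul_eq_smul hM
  have hsum (j : Fin 3) : (![1, -1, 1] ᵥ* M) j = M 0 j - M 1 j + M 2 j := by
    simp [vecMul, dotProduct, Fin.sum_univ_three, sub_eq_add_neg]
  refine ⟨c, ?_, ?_, ?_⟩ <;> rw [← hsum, hc] <;> simp

theorem eq_one_of_isIsolatedOne_two_two (hM : M ∈ E3N) (h : IsIsolatedOne M 2 2) : M = 1 := by
  obtain ⟨c, h₀, h₁, h₂⟩ := exists_alternating_col_sums hM
  obtain ⟨nonneg, -, det_eq⟩ := hM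
  have h20 : M 2 0 = 0 := h.row_apply_eq_zero (by decide)
  have h21 : M 2 1 = 0 := h.row_apply_eq_zero (by decide)
  have h02 : M 0 2 = 0 := h.col_apply_eq_zero (by decide)
  have h12 : M 1 2 = 0 := h.col_apply_eq_zero (by decide)
  have h22 : M 2 2 = 1 := h.apply_eq_one
  have h00 : M 0 0 = M 1 0 + 1 := by omega
  have h11 : M 1 1 = M 0 1 + 1 := by omega
  have hdet : M.det = M 1 0 + M 0 1 + 1 := by
    rw [det_fin_three, h20, h21, h02, h12, h22, h00, h11]
    ring
  have nonneg10 := nonneg 1 0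
  have nonneg01 := nonneg 0 1
  have h10 : M 1 0 = 0 := by omega
  have h01 : M 0 1 = 0 := by omega
  rw [eta_fin_three M, one_fin_three, h00, h11, h10, h01, h20, h21, h02, h12, h22, zero_add]

theorem eq_Pmat_of_isIsolatedOne_two_zero (hM : M ∈ E3N) (h : IsIsolatedOne M 2 0) :
    M = Pmat := by
  have hP : IsIsolatedOne Pmat 0 2 := ⟨by decide, by decide⟩
  have hMP : M * Pmat = 1 := eq_one_of_isIsolatedOne_two_two (mul_mem hM Pmat_mem) (h.mul hP)
  calc M = M * Pmat * Pmat := by rw [Matrix.mul_assoc, show Pmat * Pmat = 1 by decide, mul_one]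
    _ = Pmat := by rw [hMP, one_mul]

theorem eq_one_or_eq_Pmat_of_isIsolatedOne_one_one (hM : M ∈ E3N) (h : IsIsolatedOne M 1 1) :
    M = 1 ∨ M = Pmat := by
  obtain ⟨c, h₀, h₁, h₂⟩ := exists_alternating_col_sums hM
  obtain ⟨nonneg, -, det_eq⟩ := hM
  have h10 : M 1 0 = 0 := h.row_apply_eq_zero (by decide)
  have h12 : M 1 2 = 0 := h.row_apply_eq_zero (by decide)
  have h01 : M 0 1 = 0 := h.col_apply_eq_zero (by decide)
  have h21 : M 2 1 = 0 := h.col_apply_eq_zero (by decide)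
  have h11 : M 1 1 = 1 := h.apply_eq_one
  have h20 : M 2 0 = 1 - M 0 0 := by omega
  have h22 : M 2 2 = 1 - M 0 2 := by omega
  have hdet : M.det = M 0 0 - M 0 2 := by
    rw [det_fin_three, h10, h12, h01, h21, h11, h20, h22]
    ring
  have nonneg00 := nonneg 0 0
  have nonneg02 := nonneg 0 2
  have nonneg20 := nonneg 2 0
  have nonneg22 := nonneg 2 2
  have hrow : (M 0 0 = 1 ∧ M 0 2 = 0) ∨ (M 0 0 = 0 ∧ M 0 2 = 1) := by omega
  rw [eta_fin_three M, one_fin_three, Pmat, h10, h12, h01, h21, h11, h20, h22]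
  rcases hrow with ⟨h00, h02⟩ | ⟨h00, h02⟩ <;> simp [h00, h02]

end E3N

theorem isIsolatedOne_Mtk (k : ℤ) : IsIsolatedOne (Mtk k) 2 1 := by
  constructor <;> ext i <;> fin_cases i <;> simp [Mtk]

/-- For every k ≥ 1, the matrix M̃_k is non-decomposable in E(3,ℕ): whenever
M̃_k = A · B with A, B ∈ E(3,ℕ), then A or B is a unit of E(3,ℕ), i.e. equals
the identity matrix or P. -/
theorem Mtk_nondecomposable (k : ℤ) (hk : 1 ≤ k) (A B : Matrix (Fin 3) (Fin 3) ℤ)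
    (hA : A ∈ E3N) (hB : B ∈ E3N) (h : Mtk k = A * B) :
    (A = 1 ∨ A = Pmat) ∨ (B = 1 ∨ B = Pmat) := by
  obtain ⟨j, hAj, hBj⟩ : ∃ j, IsIsolatedOne A 2 j ∧ IsIsolatedOne B j 1 :=
    IsIsolatedOne.exists_of_mul hA.1 hB.1 (col_ne_zero_of_det_ne_zero (E3N.det_ne_zero hA))
      (row_ne_zero_of_det_ne_zero (E3N.det_ne_zero hB)) (h ▸ isIsolatedOne_Mtk k)
  match j with
  | 0 => exact Or.inl (Or.inr (E3N.eq_Pmat_of_isIsolatedOne_two_zero hA hAj))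
  | 1 => exact Or.inr (E3N.eq_one_or_eq_Pmat_of_isIsolatedOne_one_one hB hBj)
  | 2 => exact Or.inl (Or.inl (E3N.eq_one_of_isIsolatedOne_two_two hA hAj))
end

section
/- Let α, β, γ > 0 be real numbers such that α+β and β+γ are linearly independent over ℚ, let T be the 3-interval exchange transformation with parameters (α,β,γ) in the left-closed convention, and let x₀ ∈ [0, α+β+γ). Let T̃ be the 3-interval exchange transformation with parameters (γ,β,α) in the right-closed convention. Then applying the morphism ξ (A↦C, B↦B, C↦A) letter by letter to the coding word u_T(x₀) yields exactly the coding word u_{T̃}(α+β+γ−x₀): for every n ∈ ℤ, ξ((u_T(x₀))_n) = (u_{T̃}(α+β+γ−x₀))_n. In particular, ξ maps every 3iet word to a 3iet word. -/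
/-- The three-letter alphabet {A, B, C}. -/
inductive Letter : Type
  | A | B | C
  deriving DecidableEq

/-- Left-closed 3-interval exchange transformation with parameters (α, β, γ),
defined piecewise on the domain [0, α+β+γ) (and extended by the same formulas
elsewhere). -/
noncomputable def Tleft (α β γ : ℝ) (x : ℝ) : ℝ :=
  if x < α then x + β + γ else if x < α + β then x - α + γ else x - α - β

/-- The inverse of `Tleft` on its domain. -/
noncomputable def TleftInv (α β γ : ℝ) (x : ℝ) : ℝ :=
  if x < γ then x + α + β else if x < β + γ then x + α - γ else x - β - γ

/-- Right-closed 3-interval exchange transformation with parameters (α, β, γ),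
defined piecewise on the domain (0, α+β+γ]. -/
noncomputable def Tright (α β γ : ℝ) (x : ℝ) : ℝ :=
  if x ≤ α then x + β + γ else if x ≤ α + β then x - α + γ else x - α - β

/-- The inverse of `Tright` on its domain. -/
noncomputable def TrightInv (α β γ : ℝ) (x : ℝ) : ℝ :=
  if x ≤ γ then x + α + β else if x ≤ β + γ then x + α - γ else x - β - γ

/-- ℤ-indexed iteration: nonnegative powers use `f`, negative powers use the
inverse map `g`. -/
noncomputable def zIter (f g : ℝ → ℝ) : ℤ → ℝ → ℝ
  | Int.ofNat n => f^[n]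
  | Int.negSucc n => g^[n + 1]

/-- The letter coding of a point, left-closed convention:
A on [0,α), B on [α,α+β), C on [α+β,α+β+γ). -/
noncomputable def codeLeft (α β : ℝ) (x : ℝ) : Letter :=
  if x < α then Letter.A else if x < α + β then Letter.B else Letter.C

/-- The letter coding of a point, right-closed convention:
A on (0,α], B on (α,α+β], C on (α+β,α+β+γ]. -/
noncomputable def codeRight (α β : ℝ) (x : ℝ) : Letter :=
  if x ≤ α then Letter.A else if x ≤ α + β then Letter.B else Letter.C

/-- The biinfinite word coding the orbit of x₀ under the left-closed
3-interval exchange transformation with parameters (α, β, γ). -/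
noncomputable def uLeft (α β γ x₀ : ℝ) (n : ℤ) : Letter :=
  codeLeft α β (zIter (Tleft α β γ) (TleftInv α β γ) n x₀)

/-- The biinfinite word coding the orbit of x₀ under the right-closed
3-interval exchange transformation with parameters (α, β, γ). -/
noncomputable def uRight (α β γ x₀ : ℝ) (n : ℤ) : Letter :=
  codeRight α β (zIter (Tright α β γ) (TrightInv α β γ) n x₀)

/-- A biinfinite word over {A,B,C} is a 3iet word if it codes the orbit of a
point under a 3-interval exchange transformation (in either convention) whose
parameters α, β, γ > 0 satisfy: α+β and β+γ are linearly independent over ℚ. -/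
def Is3ietWord (u : ℤ → Letter) : Prop :=
  ∃ α β γ x₀ : ℝ, 0 < α ∧ 0 < β ∧ 0 < γ ∧
    LinearIndependent ℚ ![α + β, β + γ] ∧
    ((x₀ ∈ Set.Ico (0 : ℝ) (α + β + γ) ∧ u = uLeft α β γ x₀) ∨
     (x₀ ∈ Set.Ioc (0 : ℝ) (α + β + γ) ∧ u = uRight α β γ x₀))

/-- The morphism ξ : A ↦ C, B ↦ B, C ↦ A, as a map on letters. -/
def xiLetter : Letter → Letter
  | Letter.A => Letter.C
  | Letter.B => Letter.B
  | Letter.C => Letter.A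

/-!
The reflection `x ↦ α + β + γ - x` carries the intervals coded `A`, `B`, `C` in the left-closed
convention with parameters `(α, β, γ)` onto those coded `C`, `B`, `A` in the right-closed convention
with parameters `(γ, β, α)`, and it conjugates the first transformation to the second. The inverse
transformation is again an interval exchange, with the parameters reversed, so the conjugacy passes
to all iterates, forward and backward. Since `ξ` and the reflection are involutions, the same
identity read backwards treats right-closed words.
-/

open Function Set

section OrderedGroup

variable {G : Type*} [AddCommGroup G] [PartialOrder G] [IsOrderedAddMonoid G] {s x : G}

lemma sub_mem_Ioc_zero_self_iff : s - x ∈ Ioc 0 s ↔ x ∈ Ico 0 s := by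
  rw [sub_mem_Ioc_iff_right, sub_self, sub_zero]

lemma sub_mem_Ico_zero_self_iff : s - x ∈ Ico 0 s ↔ x ∈ Ioc 0 s := by
  rw [sub_mem_Ico_iff_right, sub_self, sub_zero]

end OrderedGroup

lemma linearIndependent_add_pair_reverse {K V : Type*} [Ring K] [AddCommGroup V] [Module K V]
    {a b c : V} (h : LinearIndependent K ![a + b, b + c]) :
    LinearIndependent K ![c + b, b + a] := by
  rwa [LinearIndependent.pair_symm_iff, add_comm b a, add_comm c b]

lemma semiconj_zIter {φ f f' g g' : ℝ → ℝ} (hf : Semiconj φ f f') (hg : Semiconj φ g g') :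
    ∀ n : ℤ, Semiconj φ (zIter f g n) (zIter f' g' n)
  | Int.ofNat n => hf.iterate_right n
  | Int.negSucc n => hg.iterate_right (n + 1)

lemma xiLetter_involutive : Involutive xiLetter := by
  rintro (_ | _ | _) <;> rfl

section Reflection

variable {α β γ : ℝ}

lemma TleftInv_eq_Tleft_reverse : TleftInv α β γ = Tleft γ β α := by
  funext x
  simp only [TleftInv, Tleft, add_comm γ β, add_right_comm x β α, sub_add_eq_add_sub,
    sub_right_comm x γ β]

lemma TrightInv_eq_Tright_reverse : TrightInv α β γ = Tright γ β α := by
  funext x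
  simp only [TrightInv, Tright, add_comm γ β, add_right_comm x β α, sub_add_eq_add_sub,
    sub_right_comm x γ β]

lemma reflect_le_iff_not_lt_add (x : ℝ) : α + β + γ - x ≤ γ ↔ ¬x < α + β := by
  rw [not_lt, sub_le_comm, add_sub_cancel_right]

lemma reflect_le_add_iff_not_lt (x : ℝ) : α + β + γ - x ≤ γ + β ↔ ¬x < α := by
  rw [not_lt, sub_le_comm, add_assoc, add_comm γ β, add_sub_cancel_right]

lemma semiconj_reflect_Tleft_Tright (hβ : 0 ≤ β) :
    Semiconj (α + β + γ - ·) (Tleft α β γ) (Tright γ β α) := by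
  intro x
  simp only [Tleft, Tright, reflect_le_iff_not_lt_add, reflect_le_add_iff_not_lt]
  split_ifs <;> linarith

lemma semiconj_reflect_TleftInv_TrightInv (hβ : 0 ≤ β) :
    Semiconj (α + β + γ - ·) (TleftInv α β γ) (TrightInv γ β α) := by
  have hsum : α + β + γ = γ + β + α := by ring
  rw [TleftInv_eq_Tleft_reverse, TrightInv_eq_Tright_reverse, hsum]
  exact semiconj_reflect_Tleft_Tright hβ

lemma xiLetter_codeLeft (hβ : 0 ≤ β) (x : ℝ) :
    xiLetter (codeLeft α β x) = codeRight γ β (α + β + γ - x) := by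
  have hlt : x < α → x < α + β := fun h => h.trans_le (le_add_of_nonneg_right hβ)
  simp only [codeLeft, codeRight, reflect_le_iff_not_lt_add, reflect_le_add_iff_not_lt]
  split_ifs <;> first | rfl | exact absurd (hlt ‹_›) ‹_›

lemma xiLetter_uLeft (hβ : 0 ≤ β) (x₀ : ℝ) (n : ℤ) :
    xiLetter (uLeft α β γ x₀ n) = uRight γ β α (α + β + γ - x₀) n := by
  have horbit := semiconj_zIter (semiconj_reflect_Tleft_Tright (α := α) (γ := γ) hβ)
    (semiconj_reflect_TleftInv_TrightInv hβ) n x₀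
  rw [uLeft, uRight, xiLetter_codeLeft (γ := γ) hβ, horbit]

lemma xiLetter_uRight (hβ : 0 ≤ β) (x₀ : ℝ) (n : ℤ) :
    xiLetter (uRight α β γ x₀ n) = uLeft γ β α (α + β + γ - x₀) n := by
  have hreflect : γ + β + α - (α + β + γ - x₀) = x₀ := by ring
  rw [← xiLetter_involutive (uLeft γ β α _ n), xiLetter_uLeft hβ, hreflect]

end Reflection

lemma Is3ietWord.map_xiLetter {u : ℤ → Letter} (hu : Is3ietWord u) :
    Is3ietWord (fun n => xiLetter (u n)) := by
  obtain ⟨α, β, γ, x₀, hα, hβ, hγ, hirr, hword⟩ := hu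
  have hsum : γ + β + α = α + β + γ := by ring
  refine ⟨γ, β, α, α + β + γ - x₀, hγ, hβ, hα, linearIndependent_add_pair_reverse hirr, ?_⟩
  rw [hsum]
  rcases hword with ⟨hx₀, rfl⟩ | ⟨hx₀, rfl⟩
  · exact Or.inr ⟨sub_mem_Ioc_zero_self_iff.2 hx₀, funext (xiLetter_uLeft hβ.le x₀)⟩
  · exact Or.inl ⟨sub_mem_Ico_zero_self_iff.2 hx₀, funext (xiLetter_uRight hβ.le x₀)⟩

theorem xi_maps_coding_words_general {α β γ : ℝ} (hβ : 0 ≤ β) (x₀ : ℝ) :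
    (∀ n : ℤ, xiLetter (uLeft α β γ x₀ n) = uRight γ β α (α + β + γ - x₀) n) ∧
    (∀ u : ℤ → Letter, Is3ietWord u → Is3ietWord (fun n => xiLetter (u n))) :=
  ⟨xiLetter_uLeft hβ x₀, fun _ => Is3ietWord.map_xiLetter⟩

/-- Applying ξ letter by letter to the coding word of x₀ under the left-closed
3iet with parameters (α,β,γ) yields the coding word of α+β+γ−x₀ under the
right-closed 3iet with parameters (γ,β,α).  In particular, ξ maps every 3iet
word to a 3iet word. -/
theorem xi_maps_coding_words (α β γ x₀ : ℝ) (hα : 0 < α) (hβ : 0 < β) (hγ : 0 < γ)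
    (hirr : LinearIndependent ℚ ![α + β, β + γ])
    (hx₀ : x₀ ∈ Set.Ico (0 : ℝ) (α + β + γ)) :
    (∀ n : ℤ, xiLetter (uLeft α β γ x₀ n) = uRight γ β α (α + β + γ - x₀) n) ∧
    (∀ u : ℤ → Letter, Is3ietWord u → Is3ietWord (fun n => xiLetter (u n))) := by
  exact xi_maps_coding_words_general hβ.le x₀
end

section
/- Let k ≥ 1 be an integer and α, β, γ > 0 real numbers. Let T be the 3-interval exchange transformation with parameters (α,β,γ) in the left-closed convention, with intervals I_A = [0,α), I_B = [α,α+β), I_C = [α+β,α+β+γ). Put |I_A'| = γ, |I_B'| = kα+(k+1)β, |I_C'| = (k−1)α+kβ+2γ, and define I_A' = [(1−k)α−kβ−γ, (1−k)α−kβ), I_B' = [(1−k)α−kβ, α+β), I_C' = [α+β, kα+(k+1)β+2γ), D' = I_A' ∪ I_B' ∪ I_C', and T' : D' → D' by T'(x) = x + |I_B'| + |I_C'| for x ∈ I_A', T'(x) = x − |I_A'| + |I_C'| for x ∈ I_B', T'(x) = x − |I_A'| − |I_B'| for x ∈ I_C'. Then: (i) I_A ∪ I_B ⊆ I_B' and I_C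 ⊆ I_C'; (ii) for every x ∈ I_C, T'(x) ∈ I_A', (T')²(x) ∈ I_C', and (T')³(x) = T(x); (iii) for every x ∈ I_B, (T')^{2l}(x) ∈ I_B' for all 0 ≤ l ≤ k, (T')^{2l+1}(x) ∈ I_C' for all 0 ≤ l ≤ k−1, and (T')^{2k+1}(x) = T(x); (iv) for every x ∈ I_A, (T')^{2l}(x) ∈ I_B' for all 0 ≤ l ≤ k−1, (T')^{2l+1}(x) ∈ I_C' for all 0 ≤ l ≤ k−2, and (T')^{2k−1}(x) = T(x). -/
open Classical

/-- The length |I_B'| = kα + (k+1)β. -/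
def lenB' (k : ℕ) (α β : ℝ) : ℝ := (k : ℝ) * α + ((k : ℝ) + 1) * β

/-- The length |I_C'| = (k−1)α + kβ + 2γ. -/
def lenC' (k : ℕ) (α β γ : ℝ) : ℝ := ((k : ℝ) - 1) * α + (k : ℝ) * β + 2 * γ

/-- The interval I_A' = [(1−k)α−kβ−γ, (1−k)α−kβ). -/
def IA' (k : ℕ) (α β γ : ℝ) : Set ℝ :=
  Set.Ico ((1 - (k : ℝ)) * α - (k : ℝ) * β - γ) ((1 - (k : ℝ)) * α - (k : ℝ) * β)

/-- The interval I_B' = [(1−k)α−kβ, α+β). -/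
def IB' (k : ℕ) (α β : ℝ) : Set ℝ :=
  Set.Ico ((1 - (k : ℝ)) * α - (k : ℝ) * β) (α + β)

/-- The interval I_C' = [α+β, kα+(k+1)β+2γ). -/
def IC' (k : ℕ) (α β γ : ℝ) : Set ℝ :=
  Set.Ico (α + β) ((k : ℝ) * α + ((k : ℝ) + 1) * β + 2 * γ)

/-- The transformation T' : it adds |I_B'| + |I_C'| on I_A', adds
|I_C'| − |I_A'| on I_B', and subtracts |I_A'| + |I_B'| elsewhere (in
particular on I_C'); here |I_A'| = γ. -/
noncomputable def T' (k : ℕ) (α β γ : ℝ) (x : ℝ) : ℝ :=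
  if x ∈ IA' k α β γ then x + lenB' k α β + lenC' k α β γ
  else if x ∈ IB' k α β then x - γ + lenC' k α β γ
  else x - γ - lenB' k α β

/-!
On `I_B'` the map `T'` is the translation by `|I_C'| - γ` and on `I_C'` it is the translation by
`-(γ + |I_B'|)`. Since `|I_B'| + 2γ = |I_C'| + (α + β)`, a passage through `I_B'` and then `I_C'`
moves a point by `-(α + β)`, so points of `I_A ∪ I_B` descend inside `I_B'` in steps of `α + β`.
The interval `I_B'` is long enough for `k` such steps from `I_B` and for `k - 1` from `I_A`; the
next application of `T'` then lands on `T x`. A point of `I_C` visits `I_C'`, `I_A'`, `I_C'`, and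
the three translations again add up to `-(α + β)`.
-/

lemma iterate_eq_sub_nsmul {G : Type*} [AddGroup G] {f : G → G} {x c : G} {m : ℕ}
    (hf : ∀ l < m, f (x - l • c) = x - l • c - c) {l : ℕ} (hl : l ≤ m) :
    f^[l] x = x - l • c := by
  induction l with
  | zero => simp
  | succ l ih =>
    rw [Function.iterate_succ_apply', ih (Nat.le_of_succ_le hl), hf l hl, succ_nsmul',
      sub_add_eq_sub_sub_swap]

lemma sub_nsmul_mem_of_ordConnected {G : Type*} [AddCommGroup G] [PartialOrder G]
    [IsOrderedAddMonoid G] {s : Set G} (hs : s.OrdConnected) {x c : G} (hc : 0 ≤ c) {m : ℕ}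
    (hx : x ∈ s) (hm : x - m • c ∈ s) {l : ℕ} (hl : l ≤ m) : x - l • c ∈ s :=
  hs.out hm hx ⟨sub_le_sub_left (nsmul_le_nsmul_left hc hl) x, sub_le_self x (nsmul_nonneg hc l)⟩

section Tleft

variable {α β γ x : ℝ}

lemma Tleft_of_lt (hx : x < α) : Tleft α β γ x = x + β + γ :=
  if_pos hx

lemma Tleft_of_mem_Ico (hx : x ∈ Set.Ico α (α + β)) : Tleft α β γ x = x - α + γ := by
  rw [Tleft, if_neg hx.1.not_gt, if_pos hx.2]

lemma Tleft_of_add_le (hβ : 0 ≤ β) (hx : α + β ≤ x) : Tleft α β γ x = x - α - β := by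
  rw [Tleft, if_neg (by linarith), if_neg hx.not_gt]

end Tleft

section Translation

variable {k : ℕ} {α β γ x : ℝ}

lemma lenB'_add_two_mul (k : ℕ) (α β γ : ℝ) :
    lenB' k α β + 2 * γ = lenC' k α β γ + (α + β) := by
  rw [lenB', lenC']
  ring

lemma T'_of_mem_IA' (hx : x ∈ IA' k α β γ) :
    T' k α β γ x = x + lenB' k α β + lenC' k α β γ :=
  if_pos hx

lemma T'_of_mem_IB' (hx : x ∈ IB' k α β) : T' k α β γ x = x - γ + lenC' k α β γ := by
  have hxA : x ∉ IA' k α β γ := fun h => h.2.not_ge hx.1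
  rw [T', if_neg hxA, if_pos hx]

lemma T'_of_add_le (hα : 0 ≤ α) (hβ : 0 ≤ β) (hx : α + β ≤ x) :
    T' k α β γ x = x - γ - lenB' k α β := by
  have hxB : x ∉ IB' k α β := fun h => h.2.not_ge hx
  have hxA : x ∉ IA' k α β γ := fun h => by
    have hkα : 0 ≤ k * α := by positivity
    have hkβ : 0 ≤ k * β := by positivity
    linarith [h.2]
  rw [T', if_neg hxA, if_neg hxB]

end Translation

section Descent

variable {k m : ℕ} {α β γ x : ℝ}

lemma T'_mem_IC' (hγ : 0 ≤ γ) (hx : x ∈ IB' k α β) (hx' : x - (α + β) ∈ IB' k α β) :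
    T' k α β γ x ∈ IC' k α β γ := by
  have hlow := hx'.1
  have hupp := hx.2
  rw [T'_of_mem_IB' hx, lenC']
  constructor <;> linarith

lemma T'_iterate_two_eq_sub (hα : 0 ≤ α) (hβ : 0 ≤ β) (hγ : 0 ≤ γ) (hx : x ∈ IB' k α β)
    (hx' : x - (α + β) ∈ IB' k α β) : (T' k α β γ)^[2] x = x - (α + β) :=
  calc T' k α β γ (T' k α β γ x)
    _ = T' k α β γ x - γ - lenB' k α β := T'_of_add_le hα hβ (T'_mem_IC' hγ hx hx').1
    _ = x - γ + lenC' k α β γ - γ - lenB' k α β := by rw [T'_of_mem_IB' hx]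
    _ = x - (α + β) := by linarith [lenB'_add_two_mul k α β γ]

lemma sub_nsmul_mem_IB' (hα : 0 ≤ α) (hβ : 0 ≤ β) (hx : x ∈ IB' k α β)
    (hm : x - m • (α + β) ∈ IB' k α β) {l : ℕ} (hl : l ≤ m) : x - l • (α + β) ∈ IB' k α β :=
  sub_nsmul_mem_of_ordConnected Set.ordConnected_Ico (add_nonneg hα hβ) hx hm hl

lemma sub_nsmul_sub_mem_IB' (hα : 0 ≤ α) (hβ : 0 ≤ β) (hx : x ∈ IB' k α β)
    (hm : x - m • (α + β) ∈ IB' k α β) {l : ℕ} (hl : l < m) :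
    x - l • (α + β) - (α + β) ∈ IB' k α β := by
  rw [sub_sub, ← succ_nsmul]
  exact sub_nsmul_mem_IB' hα hβ hx hm hl

lemma T'_iterate_two_mul (hα : 0 ≤ α) (hβ : 0 ≤ β) (hγ : 0 ≤ γ) (hx : x ∈ IB' k α β)
    (hm : x - m • (α + β) ∈ IB' k α β) {l : ℕ} (hl : l ≤ m) :
    (T' k α β γ)^[2 * l] x = x - l • (α + β) := by
  rw [Function.iterate_mul]
  exact iterate_eq_sub_nsmul (fun j hj => T'_iterate_two_eq_sub hα hβ hγ
    (sub_nsmul_mem_IB' hα hβ hx hm hj.le) (sub_nsmul_sub_mem_IB' hα hβ hx hm hj)) hl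

lemma T'_iterate_two_mul_mem_IB' (hα : 0 ≤ α) (hβ : 0 ≤ β) (hγ : 0 ≤ γ) (hx : x ∈ IB' k α β)
    (hm : x - m • (α + β) ∈ IB' k α β) {l : ℕ} (hl : l ≤ m) :
    (T' k α β γ)^[2 * l] x ∈ IB' k α β := by
  rw [T'_iterate_two_mul hα hβ hγ hx hm hl]
  exact sub_nsmul_mem_IB' hα hβ hx hm hl

lemma T'_iterate_two_mul_add_one_mem_IC' (hα : 0 ≤ α) (hβ : 0 ≤ β) (hγ : 0 ≤ γ)
    (hx : x ∈ IB' k α β) (hm : x - m • (α + β) ∈ IB' k α β) {l : ℕ} (hl : l < m) :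
    (T' k α β γ)^[2 * l + 1] x ∈ IC' k α β γ := by
  rw [Function.iterate_succ_apply', T'_iterate_two_mul hα hβ hγ hx hm hl.le]
  exact T'_mem_IC' hγ (sub_nsmul_mem_IB' hα hβ hx hm hl.le)
    (sub_nsmul_sub_mem_IB' hα hβ hx hm hl)

lemma T'_iterate_two_mul_add_one (hα : 0 ≤ α) (hβ : 0 ≤ β) (hγ : 0 ≤ γ) (hx : x ∈ IB' k α β)
    (hm : x - m • (α + β) ∈ IB' k α β) :
    (T' k α β γ)^[2 * m + 1] x = x - m • (α + β) - γ + lenC' k α β γ := by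
  rw [Function.iterate_succ_apply', T'_iterate_two_mul hα hβ hγ hx hm le_rfl, T'_of_mem_IB' hm]

end Descent

section Inducing

variable {k : ℕ} {α β γ x : ℝ}

lemma Ico_zero_add_subset_IB' (hk : 1 ≤ k) (hα : 0 ≤ α) (hβ : 0 ≤ β) :
    Set.Ico 0 (α + β) ⊆ IB' k α β := by
  have hkα : α ≤ k * α := le_mul_of_one_le_left hα (by exact_mod_cast hk)
  have hkβ : 0 ≤ k * β := by positivity
  exact Set.Ico_subset_Ico_left (by linarith)

lemma Ico_zero_subset_IB' (hk : 1 ≤ k) (hα : 0 ≤ α) (hβ : 0 ≤ β) : Set.Ico 0 α ⊆ IB' k α β :=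
  (Set.Ico_subset_Ico_right (le_add_of_nonneg_right hβ)).trans (Ico_zero_add_subset_IB' hk hα hβ)

lemma Ico_subset_IB' (hα : 0 ≤ α) (hβ : 0 ≤ β) : Set.Ico α (α + β) ⊆ IB' k α β := by
  have hkα : 0 ≤ k * α := by positivity
  have hkβ : 0 ≤ k * β := by positivity
  exact Set.Ico_subset_Ico_left (by linarith)

lemma Ico_add_subset_IC' (hk : 1 ≤ k) (hα : 0 ≤ α) (hβ : 0 ≤ β) (hγ : 0 ≤ γ) :
    Set.Ico (α + β) (α + β + γ) ⊆ IC' k α β γ := by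
  have hkα : α ≤ k * α := le_mul_of_one_le_left hα (by exact_mod_cast hk)
  have hkβ : 0 ≤ k * β := by positivity
  exact Set.Ico_subset_Ico_right (by linarith)

lemma T'_mem_IA'_of_mem_Ico (hα : 0 ≤ α) (hβ : 0 ≤ β) (hx : x ∈ Set.Ico (α + β) (α + β + γ)) :
    T' k α β γ x ∈ IA' k α β γ := by
  obtain ⟨hlow, hupp⟩ := hx
  rw [T'_of_add_le hα hβ hlow, lenB']
  constructor <;> linarith

lemma T'_iterate_two_of_mem_Ico (hα : 0 ≤ α) (hβ : 0 ≤ β)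
    (hx : x ∈ Set.Ico (α + β) (α + β + γ)) :
    (T' k α β γ)^[2] x = x - γ + lenC' k α β γ :=
  calc T' k α β γ (T' k α β γ x)
    _ = T' k α β γ x + lenB' k α β + lenC' k α β γ :=
      T'_of_mem_IA' (T'_mem_IA'_of_mem_Ico hα hβ hx)
    _ = x - γ + lenC' k α β γ := by rw [T'_of_add_le hα hβ hx.1]; ring

lemma T'_iterate_two_mem_IC' (hk : 1 ≤ k) (hα : 0 ≤ α) (hβ : 0 ≤ β)
    (hx : x ∈ Set.Ico (α + β) (α + β + γ)) : (T' k α β γ)^[2] x ∈ IC' k α β γ := by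
  have hkα : α ≤ k * α := le_mul_of_one_le_left hα (by exact_mod_cast hk)
  have hkβ : 0 ≤ k * β := by positivity
  rw [T'_iterate_two_of_mem_Ico hα hβ hx, lenC']
  obtain ⟨hlow, hupp⟩ := hx
  constructor <;> linarith

lemma T'_iterate_three_eq_Tleft (hk : 1 ≤ k) (hα : 0 ≤ α) (hβ : 0 ≤ β)
    (hx : x ∈ Set.Ico (α + β) (α + β + γ)) : (T' k α β γ)^[3] x = Tleft α β γ x := by
  have hC : (T' k α β γ)^[2] x ∈ IC' k α β γ := T'_iterate_two_mem_IC' hk hα hβ hx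
  rw [Function.iterate_succ_apply', T'_of_add_le hα hβ hC.1, T'_iterate_two_of_mem_Ico hα hβ hx,
    Tleft_of_add_le hβ hx.1]
  linarith [lenB'_add_two_mul k α β γ]

lemma sub_nsmul_mem_IB'_of_mem_Ico (hα : 0 ≤ α) (hβ : 0 ≤ β) (hx : x ∈ Set.Ico α (α + β)) :
    x - k • (α + β) ∈ IB' k α β := by
  obtain ⟨hlow, hupp⟩ := hx
  have hdrop : 0 ≤ k * (α + β) := by positivity
  rw [nsmul_eq_mul]
  constructor <;> linarith

lemma sub_nsmul_mem_IB'_succ_of_mem_Ico (hα : 0 ≤ α) (hβ : 0 ≤ β) (hx : x ∈ Set.Ico 0 α) :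
    x - k • (α + β) ∈ IB' (k + 1) α β := by
  obtain ⟨hlow, hupp⟩ := hx
  have hdrop : 0 ≤ k * (α + β) := by positivity
  rw [nsmul_eq_mul, IB', Nat.cast_succ]
  constructor <;> linarith

lemma T'_iterate_eq_Tleft_of_mem_Ico (hα : 0 ≤ α) (hβ : 0 ≤ β) (hγ : 0 ≤ γ)
    (hx : x ∈ Set.Ico α (α + β)) : (T' k α β γ)^[2 * k + 1] x = Tleft α β γ x := by
  rw [T'_iterate_two_mul_add_one hα hβ hγ (Ico_subset_IB' hα hβ hx)
      (sub_nsmul_mem_IB'_of_mem_Ico hα hβ hx),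
    Tleft_of_mem_Ico hx, lenC', nsmul_eq_mul]
  ring

lemma T'_succ_iterate_eq_Tleft_of_mem_Ico (hα : 0 ≤ α) (hβ : 0 ≤ β) (hγ : 0 ≤ γ)
    (hx : x ∈ Set.Ico 0 α) : (T' (k + 1) α β γ)^[2 * k + 1] x = Tleft α β γ x := by
  have hxB : x ∈ IB' (k + 1) α β := Ico_zero_subset_IB' k.succ_pos hα hβ hx
  rw [T'_iterate_two_mul_add_one hα hβ hγ hxB (sub_nsmul_mem_IB'_succ_of_mem_Ico hα hβ hx),
    Tleft_of_lt hx.2, lenC', nsmul_eq_mul, Nat.cast_succ]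
  ring

end Inducing

/-- The key properties of the induced transformation T' from
Lemma 4 (`phik_is_3iet`) of the paper. -/
theorem Tprime_properties (k : ℕ) (hk : 1 ≤ k) (α β γ : ℝ)
    (hα : 0 < α) (hβ : 0 < β) (hγ : 0 < γ) :
    -- (i) I_A ∪ I_B ⊆ I_B' and I_C ⊆ I_C'
    (Set.Ico (0 : ℝ) (α + β) ⊆ IB' k α β ∧
     Set.Ico (α + β) (α + β + γ) ⊆ IC' k α β γ) ∧
    -- (ii) behaviour on I_C
    (∀ x ∈ Set.Ico (α + β) (α + β + γ),
      T' k α β γ x ∈ IA' k α β γ ∧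
      (T' k α β γ)^[2] x ∈ IC' k α β γ ∧
      (T' k α β γ)^[3] x = Tleft α β γ x) ∧
    -- (iii) behaviour on I_B
    (∀ x ∈ Set.Ico α (α + β),
      (∀ l : ℕ, l ≤ k → (T' k α β γ)^[2 * l] x ∈ IB' k α β) ∧
      (∀ l : ℕ, l < k → (T' k α β γ)^[2 * l + 1] x ∈ IC' k α β γ) ∧
      (T' k α β γ)^[2 * k + 1] x = Tleft α β γ x) ∧
    -- (iv) behaviour on I_A
    (∀ x ∈ Set.Ico (0 : ℝ) α,
      (∀ l : ℕ, l < k → (T' k α β γ)^[2 * l] x ∈ IB' k α β) ∧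
      (∀ l : ℕ, l + 1 < k → (T' k α β γ)^[2 * l + 1] x ∈ IC' k α β γ) ∧
      (T' k α β γ)^[2 * k - 1] x = Tleft α β γ x) := by
  refine ⟨⟨Ico_zero_add_subset_IB' hk hα.le hβ.le, Ico_add_subset_IC' hk hα.le hβ.le hγ.le⟩,
    fun x hx => ?_, fun x hx => ?_, fun x hx => ?_⟩
  · exact ⟨T'_mem_IA'_of_mem_Ico hα.le hβ.le hx, T'_iterate_two_mem_IC' hk hα.le hβ.le hx,
      T'_iterate_three_eq_Tleft hk hα.le hβ.le hx⟩
  · have hxB : x ∈ IB' k α β := Ico_subset_IB' hα.le hβ.le hx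
    have hend : x - k • (α + β) ∈ IB' k α β := sub_nsmul_mem_IB'_of_mem_Ico hα.le hβ.le hx
    exact ⟨fun l hl => T'_iterate_two_mul_mem_IB' hα.le hβ.le hγ.le hxB hend hl,
      fun l hl => T'_iterate_two_mul_add_one_mem_IC' hα.le hβ.le hγ.le hxB hend hl,
      T'_iterate_eq_Tleft_of_mem_Ico hα.le hβ.le hγ.le hx⟩
  · have hxB : x ∈ IB' k α β := Ico_zero_subset_IB' hk hα.le hβ.le hx
    obtain ⟨m, rfl⟩ := Nat.exists_eq_add_of_le' hk
    have hend : x - m • (α + β) ∈ IB' (m + 1) α β :=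
      sub_nsmul_mem_IB'_succ_of_mem_Ico hα.le hβ.le hx
    exact ⟨fun l hl => T'_iterate_two_mul_mem_IB' hα.le hβ.le hγ.le hxB hend (Nat.le_of_lt_succ hl),
      fun l hl => T'_iterate_two_mul_add_one_mem_IC' hα.le hβ.le hγ.le hxB hend
        (Nat.lt_of_succ_lt_succ hl),
      T'_succ_iterate_eq_Tleft_of_mem_Ico hα.le hβ.le hγ.le hx⟩
end

section
/- For every integer k ≥ 1, the morphism φ_k given by φ_k(A) = B(CB)^{k−1}, φ_k(B) = B(CB)^k, φ_k(C) = CAC is 3iet preserving: for every 3iet word u, the biinfinite word φ_k(u) is again a 3iet word. Specifically, if u = u_T(x₀) is the 3iet word coding the orbit of x₀ under the left-closed 3-interval exchange transformation T with parameters (α,β,γ), then φ_k(u) is the 3iet word coding the orbit of x₀ + (k−1)α + kβ + γ under the left-closed 3-interval exchange transformation with parameters (γ, kα+(k+1)β, (k−1)α+kβ+2γ). -/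
/-- A morphism over the alphabet {A,B,C}, determined by the images of the
three letters (as an endomorphism of the free monoid {A,B,C}*). -/
abbrev Morph := Letter → List Letter

/-- `IsImageWord φ u v` says that v is the biinfinite word
···φ(u₋₂)φ(u₋₁)φ(u₀)φ(u₁)···, in which the block φ(u₀) starts at position 0:
`c m` is the position at which the block φ(u_m) starts. -/
def IsImageWord (φ : Morph) (u v : ℤ → Letter) : Prop :=
  ∃ c : ℤ → ℤ, c 0 = 0 ∧ (∀ m : ℤ, c (m + 1) = c m + (φ (u m)).length) ∧
    ∀ (m : ℤ) (i : ℕ) (h : i < (φ (u m)).length),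
      v (c m + (i : ℤ)) = (φ (u m)).get ⟨i, h⟩

/-- A morphism is 3iet preserving if its letter images are nonempty (so that
it acts on biinfinite words) and it maps every 3iet word to a 3iet word. -/
def Preserves3iet (φ : Morph) : Prop :=
  (∀ a, φ a ≠ []) ∧
  ∀ u v : ℤ → Letter, Is3ietWord u → IsImageWord φ u v → Is3ietWord v

/-- The morphism φ_k : A ↦ B(CB)^{k−1}, B ↦ B(CB)^k, C ↦ CAC. -/
def phiK (k : ℕ) : Morph
  | Letter.A => Letter.B :: (List.replicate (k - 1) [Letter.C, Letter.B]).flatten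
  | Letter.B => Letter.B :: (List.replicate k [Letter.C, Letter.B]).flatten
  | Letter.C => [Letter.C, Letter.A, Letter.C]

/-!
Write `s = (k−1)α + kβ + γ`. The exchange `S` with parameters `(γ, kα+(k+1)β, (k−1)α+kβ+2γ)` moves
its `B`-points by `s` and its `C`-points by `−(s+α+β)`, so a passage through `BC` descends by `α+β`.
Consequently `S` induces, on the translate by `s` of the domain of the exchange `T` with parameters
`(α,β,γ)`, the translate of `T`, and the letters read by `S` before returning to this interval spell
`φ_k` of the letter of the starting point. Concatenating these blocks turns
the `T`-orbit of `x₀` into the `S`-orbit of `x₀ + s`; backwards in time this uses the injectivity of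
`S`. Rational independence is inherited because the new pair of sums is the image of
`(α+β, β+γ)` under an integer matrix of determinant 1.
-/

/-! ### Orbits of a bijection indexed by the integers -/

/-- `f` restricts to a bijection of `D` with inverse `g`; outside `D` nothing is required. -/
structure IsInverseOn (f g : ℝ → ℝ) (D : Set ℝ) : Prop where
  mapsTo : Set.MapsTo f D D
  mapsTo_inv : Set.MapsTo g D D
  invOn : Set.InvOn g f D D

namespace IsInverseOn

variable {f g : ℝ → ℝ} {D : Set ℝ} {x y : ℝ}

/-- The permutation of `D` given by `f`, through which `zIter f g` becomes an integer power in a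
group. -/
def toPerm (h : IsInverseOn f g D) : Equiv.Perm D where
  toFun := h.mapsTo.restrict f D D
  invFun := h.mapsTo_inv.restrict g D D
  left_inv z := Subtype.ext (h.invOn.1 z.2)
  right_inv z := Subtype.ext (h.invOn.2 z.2)

theorem coe_toPerm_zpow (h : IsInverseOn f g D) (n : ℤ) (z : D) :
    ((h.toPerm ^ n) z : ℝ) = zIter f g n z := by
  cases n with
  | ofNat n => exact h.mapsTo.coe_iterate_restrict z n
  | negSucc n =>
    rw [zpow_negSucc, ← inv_pow]
    exact h.mapsTo_inv.coe_iterate_restrict z (n + 1)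

theorem zIter_mem (h : IsInverseOn f g D) (hx : x ∈ D) (n : ℤ) : zIter f g n x ∈ D :=
  h.coe_toPerm_zpow n ⟨x, hx⟩ ▸ Subtype.coe_prop _

theorem zIter_add (h : IsInverseOn f g D) (hx : x ∈ D) (m n : ℤ) :
    zIter f g (m + n) x = zIter f g n (zIter f g m x) := by
  have hadd : (h.toPerm ^ (m + n)) ⟨x, hx⟩ = (h.toPerm ^ n) ((h.toPerm ^ m) ⟨x, hx⟩) := by
    rw [add_comm, zpow_add, Equiv.Perm.mul_apply]
  simpa only [coe_toPerm_zpow] using congrArg Subtype.val hadd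

theorem zIter_inj (h : IsInverseOn f g D) (hx : x ∈ D) (hy : y ∈ D) (n : ℤ) :
    zIter f g n x = zIter f g n y ↔ x = y := by
  rw [← h.coe_toPerm_zpow n ⟨x, hx⟩, ← h.coe_toPerm_zpow n ⟨y, hy⟩, Subtype.coe_inj,
    EmbeddingLike.apply_eq_iff_eq, Subtype.mk_eq_mk]

end IsInverseOn

/-! ### Itineraries and image words -/

/-- The orbit segment of `y` under `f` has itinerary `w` with respect to the coding `code`, and it
ends at `z`, the point reached after the last letter of `w`. -/
def Reads {X L : Type*} (f : X → X) (code : X → L) : List L → X → X → Prop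
  | [], y, z => y = z
  | l :: w, y, z => code y = l ∧ Reads f code w (f y) z

namespace Reads

variable {X L : Type*} {f : X → X} {code : X → L} {w w' : List L} {y z t : X}

theorem append (h : Reads f code w y z) (h' : Reads f code w' z t) :
    Reads f code (w ++ w') y t := by
  induction w generalizing y with
  | nil => rwa [show y = z from h]
  | cons l w ih => exact ⟨h.1, ih h.2⟩

theorem code_iterate (h : Reads f code w y z) (i : ℕ) (hi : i < w.length) :
    code (f^[i] y) = w[i] := by
  induction w generalizing y i with
  | nil => exact absurd hi (Nat.not_lt_zero i)
  | cons l w ih =>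
    cases i with
    | zero => exact h.1
    | succ i => exact ih h.2 i (Nat.lt_of_succ_lt_succ hi)

theorem iterate_length (h : Reads f code w y z) : f^[w.length] y = z := by
  induction w generalizing y with
  | nil => exact h
  | cons l w ih => exact ih h.2

end Reads

theorem exists_eq_add_natCast_of_partition {c : ℤ → ℤ} {len : ℤ → ℕ}
    (hc : ∀ m, c (m + 1) = c m + len m) (hlen : ∀ m, 0 < len m) (n : ℤ) :
    ∃ (m : ℤ) (i : ℕ), i < len m ∧ n = c m + i := by
  induction n using Int.inductionOn' (b := c 0) with
  | zero => exact ⟨0, 0, hlen 0, by simp⟩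
  | succ n _ ih =>
    obtain ⟨m, i, hi, rfl⟩ := ih
    by_cases hlast : i + 1 < len m
    · exact ⟨m, i + 1, hlast, by push_cast; ring⟩
    · exact ⟨m + 1, 0, hlen _, by rw [hc]; omega⟩
  | pred n _ ih =>
    obtain ⟨m, i, hi, rfl⟩ := ih
    rcases Nat.eq_zero_or_pos i with rfl | hpos
    · have hm := hc (m - 1)
      rw [sub_add_cancel] at hm
      have hpred := hlen (m - 1)
      exact ⟨m - 1, len (m - 1) - 1, by omega, by omega⟩
    · exact ⟨m, i - 1, by omega, by omega⟩

section Induced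

variable {T Tinv S Sinv θ : ℝ → ℝ} {code code' : ℝ → Letter} {D E : Set ℝ} {φ : Morph} {x : ℝ}

theorem zIter_blockStart (hT : IsInverseOn T Tinv D) (hS : IsInverseOn S Sinv E)
    (hθ : Set.MapsTo θ D E)
    (hreads : ∀ y ∈ D, Reads S code' (φ (code y)) (θ y) (θ (T y))) (hx : x ∈ D)
    {c : ℤ → ℤ} (hc₀ : c 0 = 0)
    (hc : ∀ m, c (m + 1) = c m + (φ (code (zIter T Tinv m x))).length) (m : ℤ) :
    zIter S Sinv (c m) (θ x) = θ (zIter T Tinv m x) := by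
  have hstep (m : ℤ) : zIter S Sinv (c (m + 1)) (θ x) = θ (zIter T Tinv (m + 1) x) ↔
      zIter S Sinv (c m) (θ x) = θ (zIter T Tinv m x) := by
    have hm := hT.zIter_mem hx m
    have hreturn : zIter S Sinv (φ (code (zIter T Tinv m x))).length (θ (zIter T Tinv m x)) =
        θ (zIter T Tinv (m + 1) x) := by
      rw [hT.zIter_add hx]
      exact (hreads _ hm).iterate_length
    rw [hc, hS.zIter_add (hθ hx), ← hreturn,
      hS.zIter_inj (hS.zIter_mem (hθ hx) _) (hθ hm)]
  induction m using Int.induction_on with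
  | zero => rw [hc₀]; rfl
  | succ n ih => exact (hstep n).mpr ih
  | pred n ih => exact (hstep _).mp (by rwa [sub_add_cancel])

theorem IsImageWord.eq_coding (hT : IsInverseOn T Tinv D) (hS : IsInverseOn S Sinv E)
    (hθ : Set.MapsTo θ D E) (hφ : ∀ a, φ a ≠ [])
    (hreads : ∀ y ∈ D, Reads S code' (φ (code y)) (θ y) (θ (T y))) (hx : x ∈ D)
    {v : ℤ → Letter} (hv : IsImageWord φ (fun n => code (zIter T Tinv n x)) v) :
    v = fun n => code' (zIter S Sinv n (θ x)) := by
  obtain ⟨c, hc₀, hc, hv⟩ := hv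
  funext n
  obtain ⟨m, i, hi, rfl⟩ := exists_eq_add_natCast_of_partition hc
    (fun m => List.length_pos_iff.mpr (hφ _)) n
  rw [hv m i hi, hS.zIter_add (hθ hx), zIter_blockStart hT hS hθ hreads hx hc₀ hc]
  exact ((hreads _ (hT.zIter_mem hx m)).code_iterate i hi).symm

end Induced

/-! ### Interval exchanges in either convention -/

/-- The properties shared by `Set.Ico` and `Set.Ioc` that the argument needs. Taking `J` to be
either of them treats the left-closed and the right-closed convention at once. -/
structure HalfOpen (J : ℝ → ℝ → Set ℝ) : Prop where
  add_mem : ∀ {a b c d x : ℝ} (t : ℝ), x ∈ J a b → c ≤ a + t → b + t ≤ d → x + t ∈ J c d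
  mem_or_mem : ∀ {a c x : ℝ} (b : ℝ), x ∈ J a c → x ∈ J a b ∨ x ∈ J b c

theorem halfOpen_Ico : HalfOpen Set.Ico where
  add_mem _ hx hc hd := ⟨by linarith [hx.1], by linarith [hx.2]⟩
  mem_or_mem b hx := (lt_or_ge _ b).imp (⟨hx.1, ·⟩) (⟨·, hx.2⟩)

theorem halfOpen_Ioc : HalfOpen Set.Ioc where
  add_mem _ hx hc hd := ⟨by linarith [hx.1], by linarith [hx.2]⟩
  mem_or_mem b hx := (le_or_gt _ b).imp (⟨hx.1, ·⟩) (⟨·, hx.2⟩)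

namespace HalfOpen

variable {J : ℝ → ℝ → Set ℝ} {a b c d x : ℝ}

theorem mono (hJ : HalfOpen J) (hc : c ≤ a) (hd : b ≤ d) : J a b ⊆ J c d := fun x hx => by
  simpa only [add_zero] using hJ.add_mem 0 hx (by rwa [add_zero]) (by rwa [add_zero])

theorem mem_or_mem_or_mem (hJ : HalfOpen J) (b c : ℝ) (hx : x ∈ J a d) :
    x ∈ J a b ∨ x ∈ J b c ∨ x ∈ J c d :=
  (hJ.mem_or_mem b hx).imp_right (hJ.mem_or_mem c)

end HalfOpen

/-- `T`, with inverse `Tinv` and coding `code`, is the 3-interval exchange with parameters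
`(α, β, γ)` on the domain `J 0 (α + β + γ)`. All displacements are written as added constants, and
`Tinv` is described on the images of the three exchanged intervals. -/
structure IsIET (J : ℝ → ℝ → Set ℝ) (α β γ : ℝ) (T Tinv : ℝ → ℝ) (code : ℝ → Letter) : Prop where
  onA : ∀ x ∈ J 0 α, code x = Letter.A ∧ T x = x + (β + γ)
  onB : ∀ x ∈ J α (α + β), code x = Letter.B ∧ T x = x + (γ - α)
  onC : ∀ x ∈ J (α + β) (α + β + γ), code x = Letter.C ∧ T x = x + -(α + β)
  inv_onA : ∀ y ∈ J (β + γ) (α + β + γ), Tinv y = y + -(β + γ)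
  inv_onB : ∀ y ∈ J γ (β + γ), Tinv y = y + (α - γ)
  inv_onC : ∀ y ∈ J 0 γ, Tinv y = y + (α + β)

theorem isIET_left {α β γ : ℝ} (hβ : 0 ≤ β) :
    IsIET Set.Ico α β γ (Tleft α β γ) (TleftInv α β γ) (codeLeft α β) := by
  constructor <;> rintro x ⟨hl, hr⟩ <;> simp only [codeLeft, Tleft, TleftInv] <;> grind

theorem isIET_right {α β γ : ℝ} (hβ : 0 ≤ β) :
    IsIET Set.Ioc α β γ (Tright α β γ) (TrightInv α β γ) (codeRight α β) := by
  constructor <;> rintro x ⟨hl, hr⟩ <;> simp only [codeRight, Tright, TrightInv] <;> grind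

namespace IsIET

variable {J : ℝ → ℝ → Set ℝ} {α β γ : ℝ} {T Tinv : ℝ → ℝ} {code : ℝ → Letter}

theorem isInverseOn (hT : IsIET J α β γ T Tinv code) (hJ : HalfOpen J)
    (hα : 0 ≤ α) (hβ : 0 ≤ β) (hγ : 0 ≤ γ) : IsInverseOn T Tinv (J 0 (α + β + γ)) := by
  have hforward : ∀ x ∈ J 0 (α + β + γ), T x ∈ J 0 (α + β + γ) ∧ Tinv (T x) = x := by
    intro x hx
    rcases hJ.mem_or_mem_or_mem α (α + β) hx with hA | hB | hC
    · have hy : x + (β + γ) ∈ J (β + γ) (α + β + γ) := hJ.add_mem _ hA (by linarith) (by linarith)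
      rw [(hT.onA x hA).2, hT.inv_onA _ hy]
      exact ⟨hJ.mono (by linarith) le_rfl hy, by ring⟩
    · have hy : x + (γ - α) ∈ J γ (β + γ) := hJ.add_mem _ hB (by linarith) (by linarith)
      rw [(hT.onB x hB).2, hT.inv_onB _ hy]
      exact ⟨hJ.mono hγ (by linarith) hy, by ring⟩
    · have hy : x + -(α + β) ∈ J 0 γ := hJ.add_mem _ hC (by linarith) (by linarith)
      rw [(hT.onC x hC).2, hT.inv_onC _ hy]
      exact ⟨hJ.mono le_rfl (by linarith) hy, by ring⟩
  have hbackward : ∀ y ∈ J 0 (α + β + γ), Tinv y ∈ J 0 (α + β + γ) ∧ T (Tinv y) = y := by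
    intro y hy
    rcases hJ.mem_or_mem_or_mem γ (β + γ) hy with hC | hB | hA
    · have hx : y + (α + β) ∈ J (α + β) (α + β + γ) := hJ.add_mem _ hC (by linarith) (by linarith)
      rw [hT.inv_onC y hC, (hT.onC _ hx).2]
      exact ⟨hJ.mono (by linarith) le_rfl hx, by ring⟩
    · have hx : y + (α - γ) ∈ J α (α + β) := hJ.add_mem _ hB (by linarith) (by linarith)
      rw [hT.inv_onB y hB, (hT.onB _ hx).2]
      exact ⟨hJ.mono hα (by linarith) hx, by ring⟩
    · have hx : y + -(β + γ) ∈ J 0 α := hJ.add_mem _ hA (by linarith) (by linarith)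
      rw [hT.inv_onA y hA, (hT.onA _ hx).2]
      exact ⟨hJ.mono le_rfl (by linarith) hx, by ring⟩
  exact ⟨fun x hx => (hforward x hx).1, fun y hy => (hbackward y hy).1,
    fun x hx => (hforward x hx).2, fun y hy => (hbackward y hy).2⟩

theorem reads_CB (hT : IsIET J α β γ T Tinv code) (hJ : HalfOpen J) (hα : 0 ≤ α)
    {δ y : ℝ} (hδ : 0 ≤ δ) (hsum : α + β = (γ - α) + δ) (hy : y ∈ J (α + δ) (α + β)) :
    Reads T code [Letter.C, Letter.B] (y + (γ - α)) (y - δ + (γ - α)) := by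
  obtain ⟨codeC, applyC⟩ := hT.onC (y + (γ - α)) (hJ.add_mem _ hy (by linarith) (by linarith))
  obtain ⟨codeB, applyB⟩ := hT.onB (y + -δ) (hJ.add_mem _ hy (by linarith) (by linarith))
  have hdescent : T (y + (γ - α)) = y + -δ := by rw [applyC]; linarith
  refine ⟨codeC, ?_⟩
  rw [hdescent, sub_eq_add_neg]
  exact ⟨codeB, applyB⟩

theorem reads_replicate_CB (hT : IsIET J α β γ T Tinv code) (hJ : HalfOpen J) (hα : 0 ≤ α)
    {δ : ℝ} (hδ : 0 ≤ δ) (hsum : α + β = (γ - α) + δ) (n : ℕ) {y : ℝ}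
    (hy : y ∈ J (α + n * δ) (α + β)) :
    Reads T code (List.replicate n [Letter.C, Letter.B]).flatten (y + (γ - α))
      (y - n * δ + (γ - α)) := by
  induction n generalizing y with
  | zero => simp [Reads]
  | succ n ih =>
    have hn : 0 ≤ n * δ := by positivity
    push_cast at hy ⊢
    have hfirst := hT.reads_CB hJ hα hδ hsum (hJ.mono (by linarith) le_rfl hy)
    have hrest := ih (y := y - δ) (by
      simpa only [sub_eq_add_neg] using hJ.add_mem (-δ) hy (by linarith) (by linarith))
    rw [List.replicate_succ, List.flatten_cons, show y - (n + 1) * δ = y - δ - n * δ by ring]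
    exact hfirst.append hrest

theorem reads_B_replicate_CB (hT : IsIET J α β γ T Tinv code) (hJ : HalfOpen J) (hα : 0 ≤ α)
    {δ : ℝ} (hδ : 0 ≤ δ) (hsum : α + β = (γ - α) + δ) (n : ℕ) {y : ℝ}
    (hy : y ∈ J (α + n * δ) (α + β)) :
    Reads T code (Letter.B :: (List.replicate n [Letter.C, Letter.B]).flatten) y
      (y - n * δ + (γ - α)) := by
  have hn : 0 ≤ n * δ := by positivity
  obtain ⟨codeB, applyB⟩ := hT.onB y (hJ.mono (by linarith) le_rfl hy)
  exact ⟨codeB, applyB ▸ hT.reads_replicate_CB hJ hα hδ hsum n hy⟩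

end IsIET

/-! ### The exchange attached to `φ_k` -/

/-- The length of the `B`-interval of the exchange coding the image under `φ_k`. -/
noncomputable def imageBeta (k : ℕ) (α β : ℝ) : ℝ := (k : ℝ) * α + ((k : ℝ) + 1) * β

/-- The length of the `C`-interval of the exchange coding the image under `φ_k`; the length of the
`A`-interval is `γ`. -/
noncomputable def imageGamma (k : ℕ) (α β γ : ℝ) : ℝ :=
  ((k : ℝ) - 1) * α + (k : ℝ) * β + 2 * γ

/-- The left end of the interval on which the exchange with parameters
`(γ, imageBeta k α β, imageGamma k α β γ)` induces a translate of the exchange with parameters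
`(α, β, γ)`. -/
noncomputable def blockShift (k : ℕ) (α β γ : ℝ) : ℝ := ((k : ℝ) - 1) * α + (k : ℝ) * β + γ

section PhiK

variable {J : ℝ → ℝ → Set ℝ} {T Tinv S Sinv : ℝ → ℝ} {code code' : ℝ → Letter} {k : ℕ}
  {α β γ x : ℝ}

theorem add_imageBeta_eq : γ + imageBeta k α β = blockShift k α β γ + (α + β) := by
  unfold imageBeta blockShift; ring

theorem imageGamma_eq : imageGamma k α β γ = blockShift k α β γ + γ := by
  unfold imageGamma blockShift; ring

theorem imageBeta_nonneg (hα : 0 ≤ α) (hβ : 0 ≤ β) : 0 ≤ imageBeta k α β := by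
  unfold imageBeta; positivity

theorem imageBeta_pos (hα : 0 ≤ α) (hβ : 0 < β) : 0 < imageBeta k α β := by
  unfold imageBeta; positivity

theorem blockShift_nonneg (hk : 1 ≤ k) (hα : 0 ≤ α) (hβ : 0 ≤ β) (hγ : 0 ≤ γ) :
    0 ≤ blockShift k α β γ := by
  have hk' : 0 ≤ (k : ℝ) - 1 := sub_nonneg.mpr (by exact_mod_cast hk)
  unfold blockShift; positivity

theorem imageGamma_nonneg (hk : 1 ≤ k) (hα : 0 ≤ α) (hβ : 0 ≤ β) (hγ : 0 ≤ γ) :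
    0 ≤ imageGamma k α β γ :=
  imageGamma_eq ▸ add_nonneg (blockShift_nonneg hk hα hβ hγ) hγ

theorem imageGamma_pos (hk : 1 ≤ k) (hα : 0 ≤ α) (hβ : 0 ≤ β) (hγ : 0 < γ) :
    0 < imageGamma k α β γ :=
  imageGamma_eq ▸ add_pos_of_nonneg_of_pos (blockShift_nonneg hk hα hβ hγ.le) hγ

theorem linearIndependent_imageParams (h : LinearIndependent ℚ ![α + β, β + γ]) :
    LinearIndependent ℚ
      ![γ + imageBeta k α β, imageBeta k α β + imageGamma k α β γ] := by
  have hfst : γ + imageBeta k α β = (k : ℚ) • (α + β) + (1 : ℚ) • (β + γ) := by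
    simp only [Rat.smul_def, imageBeta]; push_cast; ring
  have hsnd : imageBeta k α β + imageGamma k α β γ =
      (2 * k - 1 : ℚ) • (α + β) + (2 : ℚ) • (β + γ) := by
    simp only [Rat.smul_def, imageBeta, imageGamma]; push_cast; ring
  rw [hfst, hsnd]
  exact (LinearIndependent.pair_add_smul_add_smul_iff _ _ _ _).mpr ⟨h, fun hdet => by linarith⟩

theorem add_blockShift_mem (hJ : HalfOpen J) (hk : 1 ≤ k) (hα : 0 ≤ α) (hβ : 0 ≤ β) (hγ : 0 ≤ γ)
    (hx : x ∈ J 0 (α + β + γ)) :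
    x + blockShift k α β γ ∈ J 0 (γ + imageBeta k α β + imageGamma k α β γ) := by
  have hs := blockShift_nonneg hk hα hβ hγ
  rw [add_imageBeta_eq, imageGamma_eq]
  exact hJ.add_mem _ hx (by linarith) (by linarith)

theorem phiK_ne_nil (k : ℕ) (l : Letter) : phiK k l ≠ [] := by
  cases l <;> simp [phiK]

theorem reads_B_replicate_CB_of_imageParams
    (hS : IsIET J γ (imageBeta k α β) (imageGamma k α β γ) S Sinv code') (hJ : HalfOpen J)
    (hα : 0 ≤ α) (hβ : 0 ≤ β) (hγ : 0 ≤ γ) (n : ℕ) {y : ℝ}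
    (hy : y ∈ J (γ + n * (α + β)) (γ + imageBeta k α β)) :
    Reads S code' (Letter.B :: (List.replicate n [Letter.C, Letter.B]).flatten) y
      (y - n * (α + β) + blockShift k α β γ) := by
  have hdisp : imageGamma k α β γ - γ = blockShift k α β γ := by rw [imageGamma_eq]; ring
  have hsum : γ + imageBeta k α β = imageGamma k α β γ - γ + (α + β) := by
    rw [hdisp, add_imageBeta_eq]
  simpa only [hdisp] using hS.reads_B_replicate_CB hJ hγ (add_nonneg hα hβ) hsum n hy

theorem reads_phiK_A (hS : IsIET J γ (imageBeta k α β) (imageGamma k α β γ) S Sinv code')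
    (hJ : HalfOpen J) (hk : 1 ≤ k) (hα : 0 ≤ α) (hβ : 0 ≤ β) (hγ : 0 ≤ γ) (hx : x ∈ J 0 α) :
    Reads S code' (phiK k Letter.A) (x + blockShift k α β γ)
      (x + (β + γ) + blockShift k α β γ) := by
  have hshift : blockShift k α β γ = ((k - 1 : ℕ) : ℝ) * (α + β) + (β + γ) := by
    rw [Nat.cast_pred hk, blockShift]; ring
  have hreads := reads_B_replicate_CB_of_imageParams hS hJ hα hβ hγ (k - 1)
    (hJ.add_mem _ hx (by linarith) (by rw [add_imageBeta_eq]; linarith))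
  convert hreads using 1
  · rfl
  · linarith

theorem reads_phiK_B (hS : IsIET J γ (imageBeta k α β) (imageGamma k α β γ) S Sinv code')
    (hJ : HalfOpen J) (hα : 0 ≤ α) (hβ : 0 ≤ β) (hγ : 0 ≤ γ) (hx : x ∈ J α (α + β)) :
    Reads S code' (phiK k Letter.B) (x + blockShift k α β γ)
      (x + (γ - α) + blockShift k α β γ) := by
  have hshift : blockShift k α β γ = k * (α + β) + (γ - α) := by rw [blockShift]; ring
  have hreads := reads_B_replicate_CB_of_imageParams hS hJ hα hβ hγ k
    (hJ.add_mem _ hx (by linarith) (by rw [add_imageBeta_eq]; linarith))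
  convert hreads using 1
  · rfl
  · linarith

theorem reads_phiK_C (hS : IsIET J γ (imageBeta k α β) (imageGamma k α β γ) S Sinv code')
    (hJ : HalfOpen J) (hk : 1 ≤ k) (hα : 0 ≤ α) (hβ : 0 ≤ β) (hγ : 0 ≤ γ)
    (hx : x ∈ J (α + β) (α + β + γ)) :
    Reads S code' (phiK k Letter.C) (x + blockShift k α β γ)
      (x + -(α + β) + blockShift k α β γ) := by
  have hs := blockShift_nonneg hk hα hβ hγ
  have hab := add_imageBeta_eq (k := k) (α := α) (β := β) (γ := γ)
  have hc := imageGamma_eq (k := k) (α := α) (β := β) (γ := γ)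
  set s := blockShift k α β γ
  obtain ⟨code₀, apply₀⟩ := hS.onC (x + s) (hJ.add_mem _ hx (by linarith) (by linarith))
  obtain ⟨code₁, apply₁⟩ := hS.onA (x + -(α + β)) (hJ.add_mem _ hx (by linarith) (by linarith))
  obtain ⟨code₂, apply₂⟩ := hS.onC (x + 2 * s) (hJ.add_mem _ hx (by linarith) (by linarith))
  have hfirst : S (x + s) = x + -(α + β) := by rw [apply₀]; linarith
  have hsecond : S (x + -(α + β)) = x + 2 * s := by rw [apply₁]; linarith
  have hthird : S (x + 2 * s) = x + -(α + β) + s := by rw [apply₂]; linarith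
  refine ⟨code₀, ?_⟩
  rw [hfirst]
  refine ⟨code₁, ?_⟩
  rw [hsecond]
  exact ⟨code₂, hthird⟩

theorem reads_phiK (hT : IsIET J α β γ T Tinv code)
    (hS : IsIET J γ (imageBeta k α β) (imageGamma k α β γ) S Sinv code')
    (hJ : HalfOpen J) (hk : 1 ≤ k) (hα : 0 ≤ α) (hβ : 0 ≤ β) (hγ : 0 ≤ γ)
    (hx : x ∈ J 0 (α + β + γ)) :
    Reads S code' (phiK k (code x)) (x + blockShift k α β γ) (T x + blockShift k α β γ) := by
  rcases hJ.mem_or_mem_or_mem α (α + β) hx with hA | hB | hC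
  · rw [(hT.onA x hA).1, (hT.onA x hA).2]
    exact reads_phiK_A hS hJ hk hα hβ hγ hA
  · rw [(hT.onB x hB).1, (hT.onB x hB).2]
    exact reads_phiK_B hS hJ hα hβ hγ hB
  · rw [(hT.onC x hC).1, (hT.onC x hC).2]
    exact reads_phiK_C hS hJ hk hα hβ hγ hC

theorem IsImageWord.eq_coding_of_phiK (hT : IsIET J α β γ T Tinv code)
    (hS : IsIET J γ (imageBeta k α β) (imageGamma k α β γ) S Sinv code')
    (hJ : HalfOpen J) (hk : 1 ≤ k) (hα : 0 ≤ α) (hβ : 0 ≤ β) (hγ : 0 ≤ γ)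
    (hx : x ∈ J 0 (α + β + γ)) {v : ℤ → Letter}
    (hv : IsImageWord (phiK k) (fun n => code (zIter T Tinv n x)) v) :
    v = fun n => code' (zIter S Sinv n (x + blockShift k α β γ)) :=
  hv.eq_coding (θ := (· + blockShift k α β γ)) (hT.isInverseOn hJ hα hβ hγ)
    (hS.isInverseOn hJ hγ (imageBeta_nonneg hα hβ) (imageGamma_nonneg hk hα hβ hγ))
    (fun _ hy => add_blockShift_mem hJ hk hα hβ hγ hy) (phiK_ne_nil k)
    (fun _ hy => reads_phiK hT hS hJ hk hα hβ hγ hy) hx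

theorem IsImageWord.eq_uLeft_of_phiK (hk : 1 ≤ k) (hα : 0 ≤ α) (hβ : 0 ≤ β) (hγ : 0 ≤ γ)
    (hx : x ∈ Set.Ico 0 (α + β + γ)) {v : ℤ → Letter}
    (hv : IsImageWord (phiK k) (uLeft α β γ x) v) :
    v = uLeft γ (imageBeta k α β) (imageGamma k α β γ) (x + blockShift k α β γ) :=
  hv.eq_coding_of_phiK (isIET_left hβ) (isIET_left (imageBeta_nonneg hα hβ)) halfOpen_Ico
    hk hα hβ hγ hx

theorem IsImageWord.eq_uRight_of_phiK (hk : 1 ≤ k) (hα : 0 ≤ α) (hβ : 0 ≤ β) (hγ : 0 ≤ γ)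
    (hx : x ∈ Set.Ioc 0 (α + β + γ)) {v : ℤ → Letter}
    (hv : IsImageWord (phiK k) (uRight α β γ x) v) :
    v = uRight γ (imageBeta k α β) (imageGamma k α β γ) (x + blockShift k α β γ) :=
  hv.eq_coding_of_phiK (isIET_right hβ) (isIET_right (imageBeta_nonneg hα hβ)) halfOpen_Ioc
    hk hα hβ hγ hx

theorem preserves3iet_phiK (hk : 1 ≤ k) : Preserves3iet (phiK k) := by
  refine ⟨phiK_ne_nil k, ?_⟩
  rintro u v ⟨α, β, γ, x₀, hα, hβ, hγ, hindep, horbit⟩ hv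
  refine ⟨γ, imageBeta k α β, imageGamma k α β γ, x₀ + blockShift k α β γ, hγ,
    imageBeta_pos hα.le hβ, imageGamma_pos hk hα.le hβ.le hγ,
    linearIndependent_imageParams hindep, ?_⟩
  rcases horbit with ⟨hx, rfl⟩ | ⟨hx, rfl⟩
  · exact Or.inl ⟨add_blockShift_mem halfOpen_Ico hk hα.le hβ.le hγ.le hx,
      hv.eq_uLeft_of_phiK hk hα.le hβ.le hγ.le hx⟩
  · exact Or.inr ⟨add_blockShift_mem halfOpen_Ioc hk hα.le hβ.le hγ.le hx,
      hv.eq_uRight_of_phiK hk hα.le hβ.le hγ.le hx⟩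

end PhiK

theorem phiK_preserves_3iet_general (k : ℕ) (hk : 1 ≤ k) :
    Preserves3iet (phiK k) ∧
    ∀ α β γ x₀ : ℝ, 0 ≤ α → 0 ≤ β → 0 ≤ γ → ∀ v : ℤ → Letter,
      (x₀ ∈ Set.Ico (0 : ℝ) (α + β + γ) → IsImageWord (phiK k) (uLeft α β γ x₀) v →
        v = uLeft γ (imageBeta k α β) (imageGamma k α β γ) (x₀ + blockShift k α β γ)) ∧
      (x₀ ∈ Set.Ioc (0 : ℝ) (α + β + γ) → IsImageWord (phiK k) (uRight α β γ x₀) v →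
        v = uRight γ (imageBeta k α β) (imageGamma k α β γ) (x₀ + blockShift k α β γ)) :=
  ⟨preserves3iet_phiK hk, fun _ _ _ _ hα hβ hγ _ =>
    ⟨fun hx hv => hv.eq_uLeft_of_phiK hk hα hβ hγ hx,
      fun hx hv => hv.eq_uRight_of_phiK hk hα hβ hγ hx⟩⟩

/-- For every k ≥ 1, the morphism φ_k is 3iet preserving; specifically, it maps
the coding word of x₀ under the left-closed 3iet with parameters (α,β,γ) to the
coding word of x₀ + (k−1)α + kβ + γ under the left-closed 3iet with parameters
(γ, kα+(k+1)β, (k−1)α+kβ+2γ). -/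
theorem phiK_preserves_3iet (k : ℕ) (hk : 1 ≤ k) :
    Preserves3iet (phiK k) ∧
    ∀ α β γ x₀ : ℝ, 0 < α → 0 < β → 0 < γ →
      LinearIndependent ℚ ![α + β, β + γ] →
      x₀ ∈ Set.Ico (0 : ℝ) (α + β + γ) →
      ∀ v : ℤ → Letter, IsImageWord (phiK k) (uLeft α β γ x₀) v →
        v = uLeft γ ((k : ℝ) * α + ((k : ℝ) + 1) * β)
              (((k : ℝ) - 1) * α + (k : ℝ) * β + 2 * γ)
              (x₀ + (((k : ℝ) - 1) * α + (k : ℝ) * β + γ)) :=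
  ⟨(phiK_preserves_3iet_general k hk).1, fun α β γ x₀ hα hβ hγ _ hx v =>
    ((phiK_preserves_3iet_general k hk).2 α β γ x₀ hα.le hβ.le hγ.le v).1 hx⟩
end
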